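/- arXiv:2012.04711 — 3 statements merged into one kernel-verified Lean document; each statement's English description precedes it below -/
import Mathlib

section
/- For every integer t ≥ 0 and 1 ≤ k ≤ n−1, the number of lattice points in the t-th dilation of the hypersimplex Δ_{k,n} equals the number of lattice points x ∈ {0,...,t}^{n} with Σ_{i=1}^{n} x_i = kt, and this count is a polynomial function of t whose coefficient of t^m is e_{k,n,m} = (1/(n−1)!) Σ_{ℓ=0}^{k−1} W(ℓ,n,m+1) A(m, k−ℓ−1) for 1 ≤ m ≤ n−1, where A denotes Eulerian numbers and W the weighted Lah numbers. -/
noncomputable section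

open Finset Pointwise

/-- The weight of a linearly ordered block (given as a list): the number of its
elements smaller than its first element. -/
def blockWeight (b : List ℕ) : ℕ := (b.filter (fun x => x < b.headI)).length

/-- `P` is a partition of `{1,…,n}` into linearly ordered blocks (nonempty lists
of distinct elements, pairwise disjoint, whose union is `{1,…,n}`). -/
def IsOrderedPartition (n : ℕ) (P : Finset (List ℕ)) : Prop :=
  (∀ b ∈ P, b ≠ [] ∧ b.Nodup) ∧
  (∀ b₁ ∈ P, ∀ b₂ ∈ P, b₁ ≠ b₂ → ∀ x, x ∈ b₁ → x ∉ b₂) ∧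
  (∀ x : ℕ, (∃ b ∈ P, x ∈ b) ↔ x ∈ Finset.Icc 1 n)

/-- The weight of an ordered partition: the sum of the weights of its blocks. -/
def partitionWeight (P : Finset (List ℕ)) : ℕ := ∑ b ∈ P, blockWeight b

/-- The weighted Lah number `W(ℓ,n,m)`: the number of partitions of `{1,…,n}`
into exactly `m` linearly ordered blocks with total weight `ℓ`.
(It vanishes for `ℓ < 0`.) -/
def weightedLah (ℓ : ℤ) (n m : ℕ) : ℕ :=
  Set.ncard {P : Finset (List ℕ) |
    IsOrderedPartition n P ∧ P.card = m ∧ (partitionWeight P : ℤ) = ℓ}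

/-- The number of cycles of a permutation of `Fin n` (fixed points count as cycles). -/
def numCycles {n : ℕ} (σ : Equiv.Perm (Fin n)) : ℕ :=
  Multiset.card σ.cycleType + (n - σ.cycleType.sum)

/-- The unsigned Stirling number of the first kind: the number of permutations of
`n` elements with exactly `m` cycles. -/
def stirlingFirst (n m : ℕ) : ℕ :=
  Nat.card {σ : Equiv.Perm (Fin n) // numCycles σ = m}

/-- The number of descents of a permutation of `Fin m`. -/
def descentCount (m : ℕ) (σ : Equiv.Perm (Fin m)) : ℕ :=
  ((Finset.range (m - 1)).filter (fun i =>
    ((List.ofFn (fun j => (σ j : ℕ))).getD (i + 1) 0) <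
      ((List.ofFn (fun j => (σ j : ℕ))).getD i 0))).card

/-- The Eulerian number `A(m,j)`: permutations of `{1,…,m}` with exactly `j` descents. -/
def eulerian (m j : ℕ) : ℕ :=
  Nat.card {σ : Equiv.Perm (Fin m) // descentCount m σ = j}

/-- The coefficient `e_{k,n,m}` of the Ehrhart polynomial of the hypersimplex. -/
def eCoef (k n m : ℕ) : ℚ :=
  (1 / (n - 1).factorial : ℚ) *
    ∑ ℓ ∈ Finset.range k, (weightedLah ℓ n (m + 1) : ℚ) * (eulerian m (k - ℓ - 1) : ℚ)

/-- Number of lattice points of the `t`-th dilate of the hypersimplex `Δ_{k,n}`,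
i.e. points of `{0,…,t}^n` with coordinate sum `k·t`. -/
def hyperCount (k n t : ℕ) : ℕ :=
  Nat.card {x : Fin n → ℤ // (∀ i, 0 ≤ x i ∧ x i ≤ (t : ℤ)) ∧ ∑ i, x i = (k : ℤ) * t}

/-- Number of lattice points of the `t`-th dilate of the half-open hypersimplex
`Δ'_{k,n} ⊆ ℝ^{n-1}` (for `k > 1`). -/
def halfOpenCount (k n t : ℕ) : ℕ :=
  Nat.card {x : Fin (n - 1) → ℤ // (∀ i, 0 ≤ x i ∧ x i ≤ (t : ℤ)) ∧
    ((k : ℤ) - 1) * t < ∑ i, x i ∧ ∑ i, x i ≤ (k : ℤ) * t}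

/-- Number of lattice points of the `t`-th dilate of the independence polytope of
`U_{k,n}`, i.e. points of `{0,…,t}^n` with coordinate sum at most `k·t`. -/
def indepCount (k n t : ℕ) : ℕ :=
  Nat.card {x : Fin n → ℤ // (∀ i, 0 ≤ x i ∧ x i ≤ (t : ℤ)) ∧ ∑ i, x i ≤ (k : ℤ) * t}

/-- Number of lattice points of a region `S ⊆ ℝ^d`. -/
def latticeCount {d : ℕ} (S : Set (Fin d → ℝ)) : ℕ :=
  Nat.card {x : Fin d → ℤ // (fun i => (x i : ℝ)) ∈ S}

/-- The hypersimplex `Δ_{k,n} ⊆ ℝ^n`. -/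
def hyperSimplex (k n : ℕ) : Set (Fin n → ℝ) :=
  {x | (∀ i, 0 ≤ x i ∧ x i ≤ 1) ∧ ∑ i, x i = (k : ℝ)}

lemma card_orderEmb (m N : ℕ) : Nat.card (Fin m ↪o Fin N) = N.choose m := by
  rw [Nat.card_congr (Set.powersetCard.ofFinEmbEquiv (n := m) (I := Fin N)), Set.powersetCard.card]
  simp

/-- indicator of a descent at `i`. -/
def dInd {M : ℕ} (σ : Equiv.Perm (Fin (M + 1))) (i : Fin M) : ℕ :=
  if σ i.succ < σ i.castSucc then 1 else 0

lemma descentCount_eq {M : ℕ} (σ : Equiv.Perm (Fin (M + 1))) :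
    descentCount (M + 1) σ = ∑ i : Fin M, dInd σ i := by
  unfold descentCount dInd
  rw [Finset.card_filter, Nat.add_sub_cancel, Finset.sum_range]
  refine Finset.sum_congr rfl fun i _ => ?_
  have h1 : (i : ℕ) + 1 < M + 1 := by omega
  have h2 : (i : ℕ) < M + 1 := by omega
  simp only [List.getD_eq_getElem?_getD, List.getElem?_ofFn, h1, h2, dif_pos, Option.getD_some,
    Fin.lt_def]
  rfl

lemma sort_eq_iff {M c : ℕ} (σ : Equiv.Perm (Fin (M + 1))) (f : Fin (M + 1) → Fin c) :
    Tuple.sort f = σ ↔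
      ∀ i : Fin M, (f (σ i.castSucc) : ℕ) + dInd σ i ≤ f (σ i.succ) := by
  rw [eq_comm, Tuple.eq_sort_iff]
  constructor
  · rintro ⟨h1, h2⟩ i
    have a := h1 (Fin.castSucc_lt_succ (i := i)).le
    have b := h2 i.castSucc i.succ Fin.castSucc_lt_succ
    simp only [Function.comp, Fin.le_def] at a
    unfold dInd
    split_ifs with h
    · have : f (σ i.castSucc) ≠ f (σ i.succ) := fun e => absurd (b e) (not_lt.2 h.le)
      have : (f (σ i.castSucc) : ℕ) ≠ f (σ i.succ) := fun e => this (Fin.ext e)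
      omega
    · omega
  · intro h
    have hs : StrictMono (fun i => toLex (f (σ i), σ i)) := by
      rw [Fin.strictMono_iff_lt_succ]
      intro i
      rw [Prod.Lex.toLex_lt_toLex]
      have := h i
      unfold dInd at this
      simp only [Fin.lt_def]
      split_ifs at this with hd
      · left; omega
      · rcases Nat.lt_or_ge (f (σ i.castSucc) : ℕ) (f (σ i.succ)) with h' | h'
        · left; exact h'
        · right
          refine ⟨Fin.ext (by omega), ?_⟩
          have hne : σ i.castSucc ≠ σ i.succ := fun e => by
            have := σ.injective e
            exact absurd this (Fin.castSucc_lt_succ (i := i)).ne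
          have := lt_of_le_of_ne (not_lt.1 hd) hne
          exact this
    constructor
    · intro i j hij
      rcases hij.eq_or_lt with e | e
      · rw [e]
      · have := hs e
        rw [Prod.Lex.toLex_lt_toLex] at this
        rcases this with h | h
        · exact h.le
        · exact h.1.le
    · intro i j hij e
      have := hs hij
      rw [Prod.Lex.toLex_lt_toLex] at this
      rcases this with h | h
      · exact absurd e h.ne
      · exact h.2

/-- number of ascents before `i`. -/
def ascB {M : ℕ} (σ : Equiv.Perm (Fin (M + 1))) (i : ℕ) : ℕ :=
  ∑ j : Fin M, if (j : ℕ) < i then 1 - dInd σ j else 0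

lemma dInd_le {M : ℕ} (σ : Equiv.Perm (Fin (M + 1))) (i : Fin M) : dInd σ i ≤ 1 := by
  unfold dInd; split_ifs <;> omega

lemma ascB_zero {M : ℕ} (σ : Equiv.Perm (Fin (M + 1))) : ascB σ 0 = 0 := by
  simp [ascB]

lemma ascB_succ {M : ℕ} (σ : Equiv.Perm (Fin (M + 1))) (i : Fin M) :
    ascB σ (i + 1) = ascB σ i + (1 - dInd σ i) := by
  unfold ascB
  have : (1 - dInd σ i) = ∑ j : Fin M, if j = i then 1 - dInd σ j else 0 := by simp
  rw [this, ← Finset.sum_add_distrib]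
  refine Finset.sum_congr rfl fun j _ => ?_
  by_cases h : j = i
  · subst h; simp
  · have : (j : ℕ) ≠ i := fun e => h (Fin.ext e)
    simp only [h, if_false, add_zero]
    have : (j : ℕ) < i + 1 ↔ (j : ℕ) < i := by omega
    simp [this]

lemma ascB_last {M : ℕ} (σ : Equiv.Perm (Fin (M + 1))) :
    ascB σ M + descentCount (M + 1) σ = M := by
  rw [descentCount_eq]
  unfold ascB
  rw [← Finset.sum_add_distrib]
  rw [Finset.sum_congr rfl (g := fun _ => 1)]
  · simp
  · intro j _
    have := dInd_le σ j
    simp; omega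

lemma card_sort_fiber {M c : ℕ} (σ : Equiv.Perm (Fin (M + 1))) :
    Nat.card {f : Fin (M + 1) → Fin c // Tuple.sort f = σ} =
      (c + ascB σ M).choose (M + 1) := by
  rw [← card_orderEmb]
  have hmono : ∀ i : Fin (M + 1), ascB σ i ≤ ascB σ M := by
    intro i
    unfold ascB
    refine Finset.sum_le_sum fun j _ => ?_
    split_ifs <;> omega
  have key : ∀ h : Fin (M + 1) ↪o Fin (c + ascB σ M), ∀ i : Fin (M + 1),
      ascB σ i ≤ h i ∧ (h i : ℕ) - ascB σ i < c := by
    intro h i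
    have hu : Monotone (fun i : Fin (M + 1) => ((h i : ℕ) : ℤ) - (ascB σ i : ℕ)) := by
      rw [Fin.monotone_iff_le_succ]
      intro i
      have h1 : h i.castSucc < h i.succ := h.strictMono Fin.castSucc_lt_succ
      have h2 := ascB_succ σ i
      simp only [Fin.lt_def] at h1
      simp only [Fin.val_castSucc, Fin.val_succ]
      omega
    have a := hu (Fin.zero_le i)
    have b := hu (Fin.le_last i)
    have d := (h (Fin.last M)).2
    simp only [Fin.val_zero, Fin.val_last, ascB_zero] at a b
    constructor <;> omega
  refine Nat.card_congr
    { toFun := fun f => OrderEmbedding.ofStrictMono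
        (fun i => ⟨(f.1 (σ i) : ℕ) + ascB σ i, by
          have := hmono i; have := (f.1 (σ i)).2; omega⟩) ?_
      invFun := fun h => ⟨fun x => ⟨(h (σ.symm x) : ℕ) - ascB σ (σ.symm x : Fin (M + 1)), ?_⟩, ?_⟩
      left_inv := ?_
      right_inv := ?_ }
  · rw [Fin.strictMono_iff_lt_succ]
    intro i
    have := (sort_eq_iff σ f.1).1 f.2 i
    have h2 := ascB_succ σ i
    have := dInd_le σ i
    simp only [Fin.lt_def, Fin.val_castSucc, Fin.val_succ]
    omega
  · exact (key h _).2
  · rw [sort_eq_iff]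
    intro i
    have h1 : h i.castSucc < h i.succ := h.strictMono Fin.castSucc_lt_succ
    have h2 := ascB_succ σ i
    have h3 := (key h i.castSucc).1
    have h4 := (key h i.succ).1
    have := dInd_le σ i
    simp only [Fin.lt_def] at h1
    simp only [Equiv.symm_apply_apply]
    simp only [Fin.val_castSucc, Fin.val_succ] at *
    omega
  · intro f
    ext x
    simp
  · intro h
    ext i
    have h3 := (key h i).1
    simp
    omega

lemma worpitzky (M c : ℕ) :
    c ^ (M + 1) = ∑ σ : Equiv.Perm (Fin (M + 1)),
      (c + M - descentCount (M + 1) σ).choose (M + 1) := by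
  classical
  have h1 : c ^ (M + 1) = Fintype.card (Fin (M + 1) → Fin c) := by simp
  rw [h1, ← Finset.card_univ, Finset.card_eq_sum_card_fiberwise (f := Tuple.sort) (t := Finset.univ)
    (fun _ _ => Finset.mem_coe.2 (Finset.mem_univ _))]
  refine Finset.sum_congr rfl fun σ _ => ?_
  have h2 := ascB_last σ
  rw [show c + M - descentCount (M + 1) σ = c + ascB σ M by omega, ← card_sort_fiber,
    Nat.card_eq_fintype_card, Fintype.card_subtype]

/-- Eulerian generating function. -/
def eulerS (m : ℕ) : PowerSeries ℚ := PowerSeries.mk fun j => (eulerian m j : ℚ)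

lemma eulerS_eq (M : ℕ) : eulerS (M + 1) =
    ∑ σ : Equiv.Perm (Fin (M + 1)), (PowerSeries.X : PowerSeries ℚ) ^ descentCount (M + 1) σ := by
  ext j
  simp only [eulerS, PowerSeries.coeff_mk, map_sum, PowerSeries.coeff_X_pow]
  rw [Finset.sum_boole, eulerian, Nat.card_eq_fintype_card, Fintype.card_subtype]
  simp only [eq_comm]

lemma powS_eq (M : ℕ) : (PowerSeries.mk fun c => (c : ℚ) ^ (M + 1)) * (1 - PowerSeries.X) ^ (M + 2) =
    PowerSeries.X * eulerS (M + 1) := by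
  have h : (PowerSeries.mk fun c => (c : ℚ) ^ (M + 1)) =
      PowerSeries.X * eulerS (M + 1) * (PowerSeries.mk fun n => (Nat.choose (M + 1 + n) (M + 1) : ℚ)) := by
    rw [eulerS_eq, Finset.mul_sum, Finset.sum_mul]
    ext c
    rw [map_sum, PowerSeries.coeff_mk]
    have := worpitzky M c
    have : ((c : ℚ)) ^ (M + 1) = ∑ σ : Equiv.Perm (Fin (M + 1)),
      ((c + M - descentCount (M + 1) σ).choose (M + 1) : ℚ) := by exact_mod_cast this
    rw [this]
    refine Finset.sum_congr rfl fun σ _ => ?_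
    rw [← pow_succ', PowerSeries.coeff_X_pow_mul']
    have h2 := ascB_last σ
    split_ifs with hc
    · rw [PowerSeries.coeff_mk]
      congr 2
      omega
    · rw [Nat.choose_eq_zero_of_lt (by omega)]; simp
  rw [h, mul_assoc]
  have := PowerSeries.mk_add_choose_mul_one_sub_pow_eq_one ℚ (M + 1)
  rw [this, mul_one]

lemma hyperCount_eq_coeff (k n t : ℕ) : (hyperCount k n t : ℚ) =
    PowerSeries.coeff (k * t) ((∑ i ∈ Finset.range (t + 1), (PowerSeries.X : PowerSeries ℚ) ^ i) ^ n) := by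
  classical
  have h1 : (∑ i ∈ Finset.range (t + 1), (PowerSeries.X : PowerSeries ℚ) ^ i) ^ n =
      ∏ _j : Fin n, ∑ i ∈ Finset.range (t + 1), (PowerSeries.X : PowerSeries ℚ) ^ i := by
    simp
  rw [h1, Finset.prod_univ_sum, map_sum]
  simp only [Finset.prod_pow_eq_pow_sum, PowerSeries.coeff_X_pow]
  rw [Finset.sum_boole, hyperCount]
  congr 1
  rw [← Fintype.card_coe, ← Nat.card_eq_fintype_card]
  refine Nat.card_congr
    { toFun := fun x => ⟨fun i => (x.1 i).toNat, ?_⟩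
      invFun := fun y => ⟨fun i => (y.1 i : ℤ), ?_⟩
      left_inv := ?_
      right_inv := ?_ }
  · obtain ⟨x, hx, hs⟩ := x
    simp only [Finset.mem_filter, Fintype.mem_piFinset, Finset.mem_range]
    refine ⟨fun i => ?_, ?_⟩
    · have := hx i; omega
    · zify
      rw [← hs]
      exact Finset.sum_congr rfl fun i _ => (by have := hx i; omega)
  · obtain ⟨y, hy⟩ := y
    simp only [Finset.mem_filter, Fintype.mem_piFinset, Finset.mem_range] at hy
    refine ⟨fun i => ?_, ?_⟩
    · have := hy.1 i; constructor <;> dsimp only <;> omega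
    · have := hy.2
      dsimp only
      exact_mod_cast this.symm
  · rintro ⟨x, hx, hs⟩
    ext i
    have := hx i
    dsimp only
    omega
  · rintro ⟨y, hy⟩
    ext i
    simp

lemma geomS (N t : ℕ) : (∑ i ∈ Finset.range (t + 1), (PowerSeries.X : PowerSeries ℚ) ^ i) ^ (N + 1) =
    (∑ j ∈ Finset.range (N + 2), PowerSeries.C ((-1 : ℚ) ^ j * ((N + 1).choose j : ℚ)) *
      (PowerSeries.X : PowerSeries ℚ) ^ ((t + 1) * j)) *
      PowerSeries.mk fun m => (Nat.choose (N + m) N : ℚ) := by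
  have h1 : (∑ i ∈ Finset.range (t + 1), (PowerSeries.X : PowerSeries ℚ) ^ i) =
      (1 - PowerSeries.X ^ (t + 1)) * PowerSeries.mk 1 := by
    rw [← mul_neg_geom_sum, mul_assoc, mul_comm, mul_assoc, PowerSeries.mk_one_mul_one_sub_eq_one, mul_one]
  rw [h1, mul_pow, PowerSeries.mk_one_pow_eq_mk_choose_add]
  congr 1
  rw [sub_eq_neg_add, add_pow]
  refine Finset.sum_congr rfl fun j _ => ?_
  rw [neg_pow, ← pow_mul]
  simp
  ring

lemma hyperCount_formula (k N t : ℕ) : (hyperCount k (N + 1) t : ℚ) =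
    ∑ j ∈ Finset.range (N + 2), (-1 : ℚ) ^ j * ((N + 1).choose j : ℚ) *
      if (t + 1) * j ≤ k * t then ((N + (k * t - (t + 1) * j)).choose N : ℚ) else 0 := by
  rw [hyperCount_eq_coeff, geomS, Finset.sum_mul, map_sum]
  refine Finset.sum_congr rfl fun j _ => ?_
  rw [mul_assoc, PowerSeries.coeff_C_mul, PowerSeries.coeff_X_pow_mul']
  simp

/-- The products `∏_{i=1}^{N} (X + i - j)`. -/
def Qp (N j : ℕ) : Polynomial ℚ :=
  ∏ i ∈ Finset.range N, (Polynomial.X + Polynomial.C ((i : ℚ) + 1 - j))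

def ehr (k N : ℕ) : Polynomial ℚ :=
  Polynomial.C (1 / (N.factorial : ℚ)) * ∑ j ∈ Finset.range k,
    Polynomial.C ((-1 : ℚ) ^ j * ((N + 1).choose j : ℚ)) *
      (Qp N j).comp (Polynomial.C ((k : ℚ) - j) * Polynomial.X)

lemma prod_choose (N a : ℕ) (x : ℚ) (hx : x + N = a) :
    ∏ i ∈ Finset.range N, (x + ((i : ℚ) + 1)) = N.factorial * (a.choose N : ℚ) := by
  rw [← Nat.cast_mul, ← Nat.descFactorial_eq_factorial_mul_choose]
  rw [← descPochhammer_eval_eq_descFactorial ℚ, descPochhammer_eval_eq_prod_range, ← Finset.prod_range_reflect]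
  refine Finset.prod_congr rfl fun i hi => ?_
  rw [Finset.mem_range] at hi
  rw [← hx, Nat.sub_sub, Nat.cast_sub (by omega)]
  push_cast; ring

lemma ehr_eval (k N t : ℕ) (hk : 1 ≤ k) (hkn : k ≤ N) :
    (hyperCount k (N + 1) t : ℚ) = (ehr k N).eval (t : ℚ) := by
  rw [hyperCount_formula, ehr]
  simp only [Polynomial.eval_mul, Polynomial.eval_C, Polynomial.eval_finsetSum, Polynomial.eval_comp,
    Polynomial.eval_X, Qp, Polynomial.eval_prod, Polynomial.eval_add]
  rw [Finset.mul_sum]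
  symm
  apply Finset.sum_subset_zero_on_sdiff
  · intro j; simp; omega
  · intro j hj
    simp only [Finset.mem_sdiff, Finset.mem_range] at hj
    rw [if_neg, mul_zero]
    have : k ≤ j := by omega
    have := Nat.mul_le_mul_left (t + 1) this
    nlinarith
  · intro j hj
    rw [Finset.mem_range] at hj
    obtain ⟨d, rfl⟩ : ∃ d, k = j + d := ⟨k - j, by omega⟩
    have h1 : ∏ i ∈ Finset.range N, ((((j + d : ℕ) : ℚ) - j) * t + ((i : ℚ) + 1 - j)) =
        N.factorial * ((d * t + (N - j)).choose N : ℚ) := by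
      rw [← prod_choose N (d * t + (N - j)) (d * t - j)]
      · refine Finset.prod_congr rfl fun i _ => ?_
        push_cast; ring
      · rw [Nat.cast_add, Nat.cast_sub (by omega)]; push_cast; ring
    rw [h1]
    have hf : (N.factorial : ℚ) ≠ 0 := by positivity
    field_simp
    have e1 : (t + 1) * j = t * j + j := by ring
    have e2 : (j + d) * t = t * j + d * t := by ring
    rw [e1, e2]
    split_ifs with h
    · congr 3
      omega
    · rw [Nat.choose_eq_zero_of_lt (show d * t + (N - j) < N by omega)]
      simp

lemma ehr_coeff (k N m : ℕ) : (ehr k N).coeff m = 1 / (N.factorial : ℚ) * ∑ j ∈ Finset.range k,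
    (-1 : ℚ) ^ j * ((N + 1).choose j : ℚ) * ((Qp N j).coeff m * ((k : ℚ) - j) ^ m) := by
  simp only [ehr, Polynomial.coeff_C_mul, Polynomial.finsetSum_coeff, Polynomial.comp_C_mul_X_coeff]

lemma lattice_eq (k n t : ℕ) (hkn : k ≤ n) :
    latticeCount ((t : ℝ) • hyperSimplex k n) = hyperCount k n t := by
  unfold latticeCount hyperCount
  refine Nat.card_congr (Equiv.subtypeEquivRight fun x => ?_)
  rcases Nat.eq_zero_or_pos t with rfl | ht
  · have hne : (hyperSimplex k n).Nonempty := by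
      refine ⟨fun i => if (i : ℕ) < k then 1 else 0, ?_, ?_⟩
      · intro i; dsimp only; split_ifs <;> norm_num
      · rw [Finset.sum_boole]
        congr 1
        rw [Fin.card_filter_val_lt]
        omega
    rw [Nat.cast_zero, Set.zero_smul_set hne]
    simp only [Set.mem_zero, funext_iff, Pi.zero_apply, Int.cast_eq_zero, Nat.cast_zero, mul_zero]
    constructor
    · intro h; simp [h]
    · rintro ⟨h, _⟩ i
      have := h i; omega
  · have ht' : (0 : ℝ) < t := by exact_mod_cast ht
    rw [Set.mem_smul_set_iff_inv_smul_mem₀ ht'.ne']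
    simp only [hyperSimplex, Set.mem_ofPred_eq, Pi.smul_apply, smul_eq_mul, ← Finset.mul_sum]
    refine and_congr (forall_congr' fun i => and_congr ?_ ?_) ?_
    · rw [mul_nonneg_iff_of_pos_left (by positivity)]
      exact_mod_cast Iff.rfl
    · rw [inv_mul_le_iff₀ ht', mul_one]
      exact_mod_cast Iff.rfl
    · rw [inv_mul_eq_iff_eq_mul₀ ht'.ne', mul_comm]
      exact_mod_cast Iff.rfl

section lahSection

def IsOP (S : Finset ℕ) (P : Finset (List ℕ)) : Prop :=
  (∀ b ∈ P, b ≠ [] ∧ b.Nodup) ∧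
  (∀ b₁ ∈ P, ∀ b₂ ∈ P, b₁ ≠ b₂ → ∀ x, x ∈ b₁ → x ∉ b₂) ∧
  (∀ x : ℕ, (∃ b ∈ P, x ∈ b) ↔ x ∈ S)

def listsOf (B : Finset ℕ) : Finset (List ℕ) := B.toList.permutations.toFinset

lemma mem_listsOf (B : Finset ℕ) (l : List ℕ) : l ∈ listsOf B ↔ l.Nodup ∧ l.toFinset = B := by
  rw [listsOf, List.mem_toFinset, List.mem_permutations]
  constructor
  · intro h
    refine ⟨h.nodup_iff.2 (Finset.nodup_toList _), ?_⟩
    ext x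
    simp [h.mem_iff]
  · rintro ⟨h1, rfl⟩
    exact List.perm_of_nodup_nodup_toFinset_eq h1 (Finset.nodup_toList _) (by simp)

open Classical in
def parts (S : Finset ℕ) : Finset (Finset (List ℕ)) :=
  ((S.powerset.biUnion listsOf).powerset).filter (IsOP S)

lemma mem_parts (S : Finset ℕ) (P : Finset (List ℕ)) : P ∈ parts S ↔ IsOP S P := by
  classical
  rw [parts, Finset.mem_filter, and_iff_right_iff_imp]
  intro h
  rw [Finset.mem_powerset]
  intro b hb
  rw [Finset.mem_biUnion]
  refine ⟨b.toFinset, ?_, ?_⟩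
  · rw [Finset.mem_powerset]
    intro x hx
    exact (h.2.2 x).1 ⟨b, hb, List.mem_toFinset.1 hx⟩
  · rw [mem_listsOf]
    exact ⟨(h.1 b hb).2, rfl⟩

variable {R : Type*} [CommRing R]

def Lsum (y z : R) (S : Finset ℕ) : R := ∑ P ∈ parts S, y ^ P.card * z ^ partitionWeight P

lemma Lsum_empty (y z : R) : Lsum y z ∅ = 1 := by
  have : parts ∅ = {∅} := by
    ext P
    rw [mem_parts, Finset.mem_singleton]
    constructor
    · intro h
      rw [Finset.eq_empty_iff_forall_notMem]
      intro b hb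
      obtain ⟨x, hx⟩ := List.exists_mem_of_ne_nil b (h.1 b hb).1
      exact absurd ((h.2.2 x).1 ⟨b, hb, hx⟩) (Finset.notMem_empty _)
    · rintro rfl
      simp [IsOP]
  simp [Lsum, this, partitionWeight]

lemma isOP_insert {S : Finset ℕ} {b : List ℕ} {Q : Finset (List ℕ)} (hb : b ≠ []) (hn : b.Nodup)
    (hbS : b.toFinset ⊆ S) (hQ : IsOP (S \ b.toFinset) Q) : IsOP S (insert b Q) := by
  have hd : ∀ c ∈ Q, ∀ x ∈ c, x ∉ b := by
    intro c hc x hx hxb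
    have := (hQ.2.2 x).1 ⟨c, hc, hx⟩
    simp [hxb] at this
  refine ⟨?_, ?_, ?_⟩
  · intro c hc
    rcases Finset.mem_insert.1 hc with rfl | hc
    · exact ⟨hb, hn⟩
    · exact hQ.1 c hc
  · intro c hc d hd' hne x hxc hxd
    rcases Finset.mem_insert.1 hc with h1 | h1 <;> rcases Finset.mem_insert.1 hd' with h2 | h2
    · exact hne (h1.trans h2.symm)
    · exact hd d h2 x hxd (h1 ▸ hxc)
    · exact hd c h1 x hxc (h2 ▸ hxd)
    · exact hQ.2.1 c h1 d h2 hne x hxc hxd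
  · intro x
    constructor
    · rintro ⟨c, hc, hx⟩
      rcases Finset.mem_insert.1 hc with rfl | hc
      · exact hbS (List.mem_toFinset.2 hx)
      · exact (Finset.mem_sdiff.1 ((hQ.2.2 x).1 ⟨c, hc, hx⟩)).1
    · intro hx
      by_cases hxb : x ∈ b
      · exact ⟨b, Finset.mem_insert_self _ _, hxb⟩
      · obtain ⟨c, hc, hx⟩ := (hQ.2.2 x).2 (Finset.mem_sdiff.2 ⟨hx, by simpa using hxb⟩)
        exact ⟨c, Finset.mem_insert_of_mem hc, hx⟩

lemma isOP_erase {S : Finset ℕ} {b : List ℕ} {P : Finset (List ℕ)} (hb : b ∈ P)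
    (hP : IsOP S P) : IsOP (S \ b.toFinset) (P.erase b) := by
  refine ⟨fun c hc => hP.1 c (Finset.mem_of_mem_erase hc), fun c hc d hd =>
    hP.2.1 c (Finset.mem_of_mem_erase hc) d (Finset.mem_of_mem_erase hd), fun x => ?_⟩
  rw [Finset.mem_sdiff, List.mem_toFinset]
  constructor
  · rintro ⟨c, hc, hx⟩
    have hc' := Finset.mem_of_mem_erase hc
    exact ⟨(hP.2.2 x).1 ⟨c, hc', hx⟩, hP.2.1 c hc' b hb (Finset.ne_of_mem_erase hc) x hx⟩
  · rintro ⟨hx, hxb⟩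
    obtain ⟨c, hc, hx⟩ := (hP.2.2 x).2 hx
    exact ⟨c, Finset.mem_erase.2 ⟨fun e => hxb (e ▸ hx), hc⟩, hx⟩

lemma Lsum_rec (y z : R) (S : Finset ℕ) (a : ℕ) (ha : a ∈ S) :
    Lsum y z S = ∑ B ∈ (S.erase a).powerset,
      y * (∑ b ∈ listsOf (insert a B), z ^ blockWeight b) * Lsum y z (S \ insert a B) := by
  have h1 : ∀ B ∈ (S.erase a).powerset,
      y * (∑ b ∈ listsOf (insert a B), z ^ blockWeight b) * Lsum y z (S \ insert a B) =
      ∑ q ∈ listsOf (insert a B) ×ˢ parts (S \ insert a B),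
        y * z ^ blockWeight q.1 * (y ^ q.2.card * z ^ partitionWeight q.2) := by
    intro B _
    rw [Finset.sum_product, Lsum, Finset.mul_sum _ _ y, Finset.sum_mul_sum]
  rw [Finset.sum_congr rfl h1, Finset.sum_sigma', Lsum]
  symm
  have hmem : ∀ q : (Σ _ : Finset ℕ, List ℕ × Finset (List ℕ)),
      q ∈ (S.erase a).powerset.sigma (fun B => listsOf (insert a B) ×ˢ parts (S \ insert a B)) →
      q.1 = q.2.1.toFinset.erase a ∧ a ∈ q.2.1 ∧ q.2.1.Nodup ∧ q.2.1.toFinset ⊆ S ∧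
        IsOP (S \ q.2.1.toFinset) q.2.2 ∧ (∀ c ∈ q.2.2, a ∉ c) := by
    rintro ⟨B, b, Q⟩ h
    simp only [Finset.mem_sigma, Finset.mem_product, mem_listsOf, mem_parts, Finset.mem_powerset] at h
    obtain ⟨hB, ⟨hn, hbB⟩, hQ⟩ := h
    have haB : a ∉ B := fun h => absurd (hB h) (Finset.notMem_erase _ _)
    dsimp only
    refine ⟨?_, ?_, hn, ?_, ?_, ?_⟩
    · rw [hbB, Finset.erase_insert haB]
    · rw [← List.mem_toFinset, hbB]; exact Finset.mem_insert_self _ _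
    · rw [hbB]
      exact Finset.insert_subset ha (hB.trans (Finset.erase_subset _ _))
    · rw [hbB]; exact hQ
    · intro c hc hac
      have := (hQ.2.2 a).1 ⟨c, hc, hac⟩
      simp at this
  refine Finset.sum_nbij (fun q => insert q.2.1 q.2.2) ?_ ?_ ?_ ?_
  · intro q hq
    obtain ⟨h1, h2, h3, h4, h5, h6⟩ := hmem q hq
    rw [mem_parts]
    exact isOP_insert (List.ne_nil_of_mem h2) h3 h4 h5
  · rintro ⟨B, b, Q⟩ hq ⟨B', b', Q'⟩ hq' he
    obtain ⟨h1, h2, h3, h4, h5, h6⟩ := hmem _ hq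
    obtain ⟨h1', h2', h3', h4', h5', h6'⟩ := hmem _ hq'
    dsimp only at *
    have hbb : b = b' := by
      have : b ∈ insert b' Q' := he ▸ Finset.mem_insert_self _ _
      rcases Finset.mem_insert.1 this with h | h
      · exact h
      · exact absurd h2 (h6' b h)
    subst hbb
    have hBB : B = B' := by rw [h1, h1']
    subst hBB
    have hQ : b ∉ Q := fun h => h6 b h h2
    have hQ' : b ∉ Q' := fun h => h6' b h h2
    have : Q = Q' := by rw [← Finset.erase_insert hQ, he, Finset.erase_insert hQ']
    rw [this]
  · intro P hP
    have hP := (mem_parts _ _).1 (Finset.mem_coe.1 hP)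
    obtain ⟨b, hb, hab⟩ := (hP.2.2 a).2 ha
    refine ⟨⟨b.toFinset.erase a, b, P.erase b⟩, ?_, Finset.insert_erase hb⟩
    have hi : insert a (b.toFinset.erase a) = b.toFinset :=
      Finset.insert_erase (List.mem_toFinset.2 hab)
    rw [Finset.mem_coe]
    simp only [Finset.mem_sigma, Finset.mem_product, mem_listsOf, mem_parts, Finset.mem_powerset, hi]
    refine ⟨Finset.erase_subset_erase _ ?_, ⟨(hP.1 b hb).2, trivial⟩, isOP_erase hb hP⟩
    intro x hx
    exact (hP.2.2 x).1 ⟨b, hb, List.mem_toFinset.1 hx⟩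
  · intro q hq
    obtain ⟨h1, h2, h3, h4, h5, h6⟩ := hmem q hq
    have hQ : q.2.1 ∉ q.2.2 := fun h => h6 _ h h2
    rw [Finset.card_insert_of_notMem hQ, partitionWeight, partitionWeight, Finset.sum_insert hQ]
    ring

lemma card_listsOf (B : Finset ℕ) : (listsOf B).card = B.card.factorial := by
  rw [listsOf, List.toFinset_card_of_nodup (List.nodup_permutations _ (Finset.nodup_toList _)),
    List.length_permutations, Finset.length_toList]

lemma sum_rank (z : R) (B : Finset ℕ) :
    ∑ h ∈ B, z ^ (B.filter (fun x => x < h)).card = ∑ i ∈ Finset.range B.card, z ^ i := by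
  induction B using Finset.induction_on_max with
  | empty => simp
  | insert a s hs ih =>
    have ha : a ∉ s := fun h => absurd (hs a h) (lt_irrefl _)
    rw [Finset.sum_insert ha, Finset.card_insert_of_notMem ha, Finset.sum_range_succ, ← ih, add_comm]
    congr 1
    · refine Finset.sum_congr rfl fun h hh => ?_
      rw [Finset.filter_insert, if_neg (hs h hh).le.not_gt]
    · rw [Finset.filter_insert, if_neg (lt_irrefl _), Finset.filter_true_of_mem hs]

lemma sum_lists (z : R) (B : Finset ℕ) (hB : B.Nonempty) :
    ∑ b ∈ listsOf B, z ^ blockWeight b =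
      ((B.card - 1).factorial : R) * ∑ i ∈ Finset.range B.card, z ^ i := by
  have : ∑ b ∈ listsOf B, z ^ blockWeight b =
      ∑ h ∈ B, ∑ l ∈ listsOf (B.erase h), z ^ (B.filter (fun x => x < h)).card := by
    rw [Finset.sum_sigma']
    symm
    refine Finset.sum_nbij (fun q => q.1 :: q.2) ?_ ?_ ?_ ?_
    · rintro ⟨h, l⟩ hq
      simp only [Finset.mem_sigma, mem_listsOf] at hq ⊢
      obtain ⟨h1, h2, h3⟩ := hq
      refine ⟨List.nodup_cons.2 ⟨?_, h2⟩, ?_⟩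
      · rw [← List.mem_toFinset, h3]; simp
      · rw [List.toFinset_cons, h3, Finset.insert_erase h1]
    · rintro ⟨h, l⟩ _ ⟨h', l'⟩ _ he
      simp only [List.cons.injEq] at he
      obtain ⟨rfl, rfl⟩ := he
      rfl
    · intro b hb
      rw [Finset.mem_coe, mem_listsOf] at hb
      obtain ⟨hn, rfl⟩ := hb
      match b, hn, hB with
      | [], _, hB => simp at hB
      | h :: l, hn, _ =>
        refine ⟨⟨h, l⟩, ?_, rfl⟩
        rw [Finset.mem_coe]
        simp only [Finset.mem_sigma, mem_listsOf]
        rw [List.nodup_cons] at hn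
        refine ⟨by simp, hn.2, ?_⟩
        rw [List.toFinset_cons, Finset.erase_insert]
        simpa using hn.1
    · rintro ⟨h, l⟩ hq
      simp only [Finset.mem_sigma, mem_listsOf] at hq
      obtain ⟨h1, h2, h3⟩ := hq
      congr 1
      have hn : (h :: l).Nodup := by
        refine List.nodup_cons.2 ⟨?_, h2⟩
        rw [← List.mem_toFinset, h3]; simp
      have hB' : B = (h :: l).toFinset := by rw [List.toFinset_cons, h3, Finset.insert_erase h1]
      rw [blockWeight, List.headI_cons, ← List.toFinset_card_of_nodup (hn.filter _), hB',
        List.toFinset_filter]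
      simp
  rw [this, ← sum_rank, Finset.mul_sum]
  refine Finset.sum_congr rfl fun h hh => ?_
  rw [Finset.sum_const, card_listsOf, Finset.card_erase_of_mem hh, nsmul_eq_mul]

lemma Lsum_eq (y z : R) (g : ℕ → R) (h0 : g 0 = 1)
    (hrec : ∀ n : ℕ, ((n : R) + 1) * g (n + 1) =
      y * ∑ b ∈ Finset.range (n + 1), (∑ i ∈ Finset.range (b + 1), z ^ i) * g (n - b))
    (n : ℕ) : ∀ S : Finset ℕ, S.card = n → Lsum y z S = (n.factorial : R) * g n := by
  induction n using Nat.strong_induction_on with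
  | _ n ih =>
    intro S hS
    rcases n with _ | n
    · rw [Finset.card_eq_zero] at hS
      subst hS
      rw [Lsum_empty, h0]; simp
    · obtain ⟨a, ha⟩ : S.Nonempty := Finset.card_pos.1 (by omega)
      have hc : (S.erase a).card = n := by rw [Finset.card_erase_of_mem ha, hS]; rfl
      rw [Lsum_rec y z S a ha]
      have h1 : ∀ B ∈ (S.erase a).powerset,
          y * (∑ b ∈ listsOf (insert a B), z ^ blockWeight b) * Lsum y z (S \ insert a B) =
          (fun b : ℕ => y * ((b.factorial : R) * ∑ i ∈ Finset.range (b + 1), z ^ i) *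
            (((n - b).factorial : R) * g (n - b))) B.card := by
        intro B hB
        rw [Finset.mem_powerset] at hB
        have haB : a ∉ B := fun h => absurd (hB h) (Finset.notMem_erase _ _)
        have hcard : (insert a B).card = B.card + 1 := Finset.card_insert_of_notMem haB
        have hle := Finset.card_le_card hB
        rw [sum_lists z _ (Finset.insert_nonempty _ _), hcard, Nat.add_sub_cancel]
        rw [ih (n - B.card) (by omega)]
        rw [Finset.card_sdiff_of_subset
          (Finset.insert_subset ha (hB.trans (Finset.erase_subset _ _))), hcard]
        omega
      refine (Finset.sum_congr rfl h1).trans ((Finset.sum_powerset_apply_card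
        (fun b : ℕ => y * ((b.factorial : R) * ∑ i ∈ Finset.range (b + 1), z ^ i) *
            (((n - b).factorial : R) * g (n - b))) (x := S.erase a)).trans ?_)
      rw [hc, Nat.factorial_succ,
        Nat.cast_mul, mul_comm ((n + 1 : ℕ) : R), mul_assoc, Nat.cast_add, Nat.cast_one, hrec,
        Finset.mul_sum, Finset.mul_sum]
      refine Finset.sum_congr rfl fun b hb => ?_
      rw [Finset.mem_range] at hb
      rw [← Nat.choose_mul_factorial_mul_factorial (show b ≤ n by omega), nsmul_eq_mul]
      push_cast
      ring

section series
open PowerSeries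

def ffac (y : R) (j : ℕ) : R := ∏ i ∈ Finset.range j, (y - i)
def rfac (y : R) (j : ℕ) : R := ∏ i ∈ Finset.range j, (y + i)

variable [Algebra ℚ R]

def invF (R : Type*) [CommRing R] [Algebra ℚ R] (j : ℕ) : R := algebraMap ℚ R (1 / (j.factorial : ℚ))

lemma invF_succ (j : ℕ) : ((j : R) + 1) * invF R (j + 1) = invF R j := by
  have h1 : (j : R) + 1 = algebraMap ℚ R ((j : ℚ) + 1) := by simp
  rw [invF, invF, h1, ← map_mul]
  congr 1
  rw [Nat.factorial_succ]
  have : (j.factorial : ℚ) ≠ 0 := by positivity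
  push_cast
  field_simp

lemma invF_choose (i j : ℕ) : ((i + j).factorial : R) * (invF R i * invF R j) = ((i + j).choose i : R) := by
  have h1 : ((i + j).factorial : R) = algebraMap ℚ R ((i + j).factorial : ℚ) := by simp
  have h2 : ((i + j).choose i : R) = algebraMap ℚ R ((i + j).choose i : ℚ) := by simp
  rw [invF, invF, h1, h2, ← map_mul, ← map_mul]
  congr 1
  rw [Nat.cast_add_choose]
  field_simp

def serA (y z : R) : PowerSeries R := PowerSeries.mk fun j => (-z) ^ j * ffac y j * invF R j
def serB (y : R) : PowerSeries R := PowerSeries.mk fun j => rfac y j * invF R j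

lemma serB_ode (y : R) : (1 - X) * d⁄dX R (serB y) = C y * serB y := by
  ext n
  rw [sub_mul, one_mul, map_sub, coeff_C_mul, coeff_derivative, serB, coeff_mk, coeff_mk]
  have h := invF_succ (R := R) n
  have e : rfac y (n + 1) = rfac y n * (y + n) := Finset.prod_range_succ _ _
  rcases n with _ | n
  · simp [rfac, invF]
  · rw [coeff_succ_X_mul, coeff_derivative, coeff_mk, e]
    push_cast at *
    linear_combination rfac y (n + 1) * (y + n + 1) * h

lemma serA_ode (y z : R) : (1 - C z * X) * d⁄dX R (serA y z) = - (C z * C y * serA y z) := by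
  ext n
  rw [sub_mul, one_mul, map_sub, map_neg, mul_assoc, mul_assoc, coeff_C_mul, coeff_C_mul, coeff_C_mul,
    coeff_derivative, serA, coeff_mk, coeff_mk]
  have h := invF_succ (R := R) n
  have e : ffac y (n + 1) = ffac y n * (y - n) := Finset.prod_range_succ _ _
  rcases n with _ | n
  · simp [ffac, invF]
  · rw [coeff_succ_X_mul, coeff_derivative, coeff_mk, e, pow_succ (-z) (n + 1)]
    push_cast at *
    linear_combination (-z) ^ (n + 1) * (-z) * ffac y (n + 1) * (y - (n + 1)) * h

lemma serT (z : R) : (1 - X) * (1 - C z * X) *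
    (PowerSeries.mk fun b => ∑ i ∈ Finset.range (b + 1), z ^ i) = 1 := by
  have h1 : (PowerSeries.mk fun b => ∑ i ∈ Finset.range (b + 1), z ^ i) =
      (PowerSeries.mk fun i => z ^ i) * PowerSeries.mk 1 := by
    ext b
    rw [coeff_mk, coeff_mul, Finset.Nat.sum_antidiagonal_eq_sum_range_succ_mk]
    simp
  have h2 : (1 - C z * X) * (PowerSeries.mk fun i => z ^ i) = 1 := by
    ext n
    rw [sub_mul, one_mul, map_sub, mul_assoc, coeff_C_mul]
    rcases n with _ | n
    · simp
    · rw [coeff_succ_X_mul, coeff_mk, coeff_mk, coeff_one, if_neg (by omega)]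
      ring
  have h3 := mk_one_mul_one_sub_eq_one R
  rw [h1]
  linear_combination (1 - X) * PowerSeries.mk 1 * h2 + h3

lemma serG (y z : R) : d⁄dX R (serA y z * serB y) =
    C (y * (1 - z)) * ((PowerSeries.mk fun b => ∑ i ∈ Finset.range (b + 1), z ^ i) *
      (serA y z * serB y)) := by
  have hT := serT z
  have hA := serA_ode y z
  have hB := serB_ode y
  rw [Derivation.leibniz, smul_eq_mul, smul_eq_mul, map_mul, map_sub, map_one]
  set T := (PowerSeries.mk fun b => ∑ i ∈ Finset.range (b + 1), z ^ i)
  set A := serA y z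
  set B := serB y
  set A' := d⁄dX R A
  set B' := d⁄dX R B
  linear_combination (-(A * B' + B * A')) * hT + T * (1 - X) * B * hA + T * (1 - C z * X) * A * hB

lemma Lsum_formula (y z : R) (S : Finset ℕ) : Lsum (y * (1 - z)) z S =
    ∑ p ∈ Finset.HasAntidiagonal.antidiagonal S.card, (S.card.choose p.1 : R) * (-z) ^ p.1 * (ffac y p.1 * rfac y p.2) := by
  rw [Lsum_eq (y * (1 - z)) z (fun n => coeff n (serA y z * serB y)) ?_ ?_ S.card S rfl]
  · rw [coeff_mul, Finset.mul_sum]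
    refine Finset.sum_congr rfl fun p hp => ?_
    rw [Finset.HasAntidiagonal.mem_antidiagonal] at hp
    have := invF_choose (R := R) p.1 p.2
    rw [hp] at this
    rw [← this, serA, serB, coeff_mk, coeff_mk]
    ring
  · simp [serA, serB, ffac, rfac, invF]
  · intro n
    have := congrArg (coeff n) (serG y z)
    rw [coeff_derivative, coeff_C_mul, coeff_mul n (PowerSeries.mk _),
      Finset.Nat.sum_antidiagonal_eq_sum_range_succ_mk] at this
    simp only [coeff_mk] at this
    rw [mul_comm, this]

lemma ffac_mul_rfac (y : R) (i N j : ℕ) (h : i + j = N + 1) :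
    ffac y i * rfac y j = y * ∏ l ∈ Finset.range N, (y + ((l : R) + 1 - i)) := by
  rcases i with _ | i
  · obtain rfl : j = N + 1 := by omega
    rw [rfac, Finset.prod_range_succ']
    simp [ffac, mul_comm]
  · obtain rfl : N = i + j := by omega
    rw [Finset.prod_range_add, ffac, Finset.prod_range_succ', rfac, ← Finset.prod_range_reflect]
    have h1 : ∏ x ∈ Finset.range i, (y - ((i - 1 - x + 1 : ℕ) : R)) =
        ∏ x ∈ Finset.range i, (y + ((x : R) + 1 - ((i + 1 : ℕ) : R))) := by
      refine Finset.prod_congr rfl fun x hx => ?_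
      rw [Finset.mem_range] at hx
      rw [show i - 1 - x + 1 = i - x by omega, Nat.cast_sub hx.le]
      push_cast; ring
    have h2 : ∏ x ∈ Finset.range j, (y + (((i + x : ℕ) : R) + 1 - ((i + 1 : ℕ) : R))) =
        ∏ x ∈ Finset.range j, (y + (x : R)) := by
      refine Finset.prod_congr rfl fun x hx => ?_
      push_cast; ring
    rw [h1, h2]
    push_cast; ring

end series

end lahSection

lemma weightedLah_eq (l n m : ℕ) : weightedLah (l : ℤ) n m =
    ((parts (Finset.Icc 1 n)).filter (fun P => P.card = m ∧ partitionWeight P = l)).card := by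
  rw [weightedLah, ← Set.ncard_coe_finset]
  congr 1
  ext P
  simp only [Finset.coe_filter, mem_parts, Set.mem_ofPred_eq]
  rw [Nat.cast_inj]
  exact Iff.rfl

def lahS (n m : ℕ) : PowerSeries ℚ := PowerSeries.mk fun l => (weightedLah (l : ℤ) n m : ℚ)

lemma lahS_eq (n m : ℕ) : lahS n m = ∑ P ∈ parts (Finset.Icc 1 n),
    if P.card = m then (PowerSeries.X : PowerSeries ℚ) ^ partitionWeight P else 0 := by
  ext l
  rw [lahS, PowerSeries.coeff_mk, weightedLah_eq, ← Finset.sum_boole, map_sum]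
  refine Finset.sum_congr rfl fun P _ => ?_
  by_cases h : P.card = m
  · simp [h, PowerSeries.coeff_X_pow, eq_comm]
  · simp [h]

lemma lahS_formula (N m : ℕ) : (1 - PowerSeries.X) ^ (m + 1) * lahS (N + 1) (m + 1) =
    ∑ j ∈ Finset.range (N + 2), PowerSeries.C ((-1 : ℚ) ^ j * ((N + 1).choose j : ℚ) * (Qp N j).coeff m) *
      PowerSeries.X ^ j := by
  have h := congrArg (fun p => Polynomial.coeff p (m + 1))
    (Lsum_formula (R := Polynomial (PowerSeries ℚ)) Polynomial.X (Polynomial.C PowerSeries.X)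
      (Finset.Icc 1 (N + 1)))
  have hl : (Lsum (Polynomial.X * (1 - Polynomial.C (PowerSeries.X : PowerSeries ℚ)))
      (Polynomial.C PowerSeries.X) (Finset.Icc 1 (N + 1))).coeff (m + 1) =
      (1 - PowerSeries.X) ^ (m + 1) * lahS (N + 1) (m + 1) := by
    rw [lahS_eq, Lsum, Polynomial.finsetSum_coeff, Finset.mul_sum]
    refine Finset.sum_congr rfl fun P _ => ?_
    have : (Polynomial.X * (1 - Polynomial.C (PowerSeries.X : PowerSeries ℚ))) ^ P.card *
        Polynomial.C PowerSeries.X ^ partitionWeight P =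
        Polynomial.C ((1 - PowerSeries.X) ^ P.card * PowerSeries.X ^ partitionWeight P) *
          Polynomial.X ^ P.card := by
      simp only [map_mul, map_pow, map_sub, map_one, mul_pow]
      ring
    rw [this, Polynomial.coeff_C_mul_X_pow]
    by_cases h : P.card = m + 1
    · simp [h]
    · simp [h, Ne.symm h]
  rw [← hl, h, Polynomial.finsetSum_coeff, Nat.card_Icc, Nat.add_sub_cancel,
    Finset.Nat.sum_antidiagonal_eq_sum_range_succ_mk]
  refine Finset.sum_congr rfl fun j hj => ?_
  rw [Finset.mem_range] at hj
  dsimp only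
  rw [ffac_mul_rfac _ j N (N + 1 - j) (by omega)]
  have hQ : ∏ l ∈ Finset.range N, ((Polynomial.X : Polynomial (PowerSeries ℚ)) +
      ((l : Polynomial (PowerSeries ℚ)) + 1 - (j : Polynomial (PowerSeries ℚ)))) =
      (Qp N j).map (PowerSeries.C : ℚ →+* PowerSeries ℚ) := by
    rw [Qp, Polynomial.map_prod]
    refine Finset.prod_congr rfl fun l _ => ?_
    simp
  rw [hQ]
  have : (((N + 1).choose j : ℕ) : Polynomial (PowerSeries ℚ)) *
      (-Polynomial.C (PowerSeries.X : PowerSeries ℚ)) ^ j =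
      Polynomial.C (PowerSeries.C ((-1 : ℚ) ^ j * ((N + 1).choose j : ℚ)) * PowerSeries.X ^ j) := by
    rw [neg_pow]
    simp
    ring
  rw [this, Polynomial.coeff_C_mul, Polynomial.coeff_X_mul, Polynomial.coeff_map]
  simp only [map_mul]
  ring

lemma key_identity (k N m : ℕ) (hm : 1 ≤ m) (hk : 1 ≤ k) (hkN : k ≤ N) :
    ∑ j ∈ Finset.range k, (-1 : ℚ) ^ j * ((N + 1).choose j : ℚ) * ((Qp N j).coeff m * ((k : ℚ) - j) ^ m) =
    ∑ l ∈ Finset.range k, (weightedLah l (N + 1) (m + 1) : ℚ) * (eulerian m (k - l - 1) : ℚ) := by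
  obtain ⟨M, rfl⟩ : ∃ M, m = M + 1 := ⟨m - 1, by omega⟩
  obtain ⟨k', rfl⟩ : ∃ k', k = k' + 1 := ⟨k - 1, by omega⟩
  have h1 := lahS_formula N (M + 1)
  have h2 := powS_eq M
  have h3 : PowerSeries.X * (lahS (N + 1) (M + 1 + 1) * eulerS (M + 1)) =
      (∑ j ∈ Finset.range (N + 2), PowerSeries.C ((-1 : ℚ) ^ j * ((N + 1).choose j : ℚ) *
        (Qp N j).coeff (M + 1)) * PowerSeries.X ^ j) * PowerSeries.mk fun c => (c : ℚ) ^ (M + 1) := by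
    rw [← h1]
    linear_combination (- lahS (N + 1) (M + 1 + 1)) * h2
  have h4 := congrArg (PowerSeries.coeff (k' + 1)) h3
  rw [PowerSeries.coeff_succ_X_mul, PowerSeries.coeff_mul,
    Finset.Nat.sum_antidiagonal_eq_sum_range_succ_mk, Finset.sum_mul, map_sum] at h4
  have hL : ∑ l ∈ Finset.range (k' + 1), (weightedLah l (N + 1) (M + 1 + 1) : ℚ) *
      (eulerian (M + 1) (k' + 1 - l - 1) : ℚ) =
      ∑ l ∈ Finset.range (k' + 1), PowerSeries.coeff l (lahS (N + 1) (M + 1 + 1)) *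
        PowerSeries.coeff (k' - l) (eulerS (M + 1)) := by
    refine Finset.sum_congr rfl fun l _ => ?_
    rw [lahS, eulerS, PowerSeries.coeff_mk, PowerSeries.coeff_mk, show k' + 1 - l - 1 = k' - l by omega]
  rw [hL]
  refine Eq.trans ?_ h4.symm
  apply Finset.sum_subset_zero_on_sdiff
  · intro j; simp; omega
  · intro j hj
    simp only [Finset.mem_sdiff, Finset.mem_range] at hj
    rw [mul_assoc, PowerSeries.coeff_C_mul, PowerSeries.coeff_X_pow_mul']
    split_ifs with h
    · rw [PowerSeries.coeff_mk, show k' + 1 - j = 0 by omega]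
      simp
    · simp
  · intro j hj
    rw [Finset.mem_range] at hj
    rw [mul_assoc (PowerSeries.C _), PowerSeries.coeff_C_mul, PowerSeries.coeff_X_pow_mul', if_pos (by omega),
      PowerSeries.coeff_mk, Nat.cast_sub (by omega)]
    ring

theorem hypersimplex_ehrhart (k n : ℕ) (hk : 1 ≤ k) (hkn : k ≤ n - 1) :
    (∀ t : ℕ, latticeCount ((t : ℝ) • hyperSimplex k n) = hyperCount k n t) ∧
      ∃ p : Polynomial ℚ, (∀ t : ℕ, (hyperCount k n t : ℚ) = p.eval (t : ℚ)) ∧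
        ∀ m, 1 ≤ m → m ≤ n - 1 → p.coeff m = eCoef k n m := by
  obtain ⟨N, rfl⟩ : ∃ N, n = N + 1 := ⟨n - 1, by omega⟩
  rw [Nat.add_sub_cancel] at hkn
  refine ⟨fun t => lattice_eq k (N + 1) t (by omega), ehr k N, fun t => ehr_eval k N t hk hkn, ?_⟩
  intro m hm _
  rw [ehr_coeff, eCoef, key_identity k N m hm hk hkn, Nat.add_sub_cancel]
end
end

section
/- For 1 < k ≤ n−1, the Ehrhart counting function t ↦ #(tΔ'_{k,n} ∩ ℤ^{n-1}) of the half-open hypersimplex is a polynomial in t of degree n−1 with all coefficients of t^m positive for 1 ≤ m ≤ n−1 and constant term 0. -/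
noncomputable section

open Finset

section gen
open PowerSeries

theorem gen_recurrence {K : Type*} [CommRing K] (x y : K) (α γ : ℕ → K)
    (hα : ∀ j : ℕ, ((j : K) + 1) * α (j + 1) = - x * (y - j) * α j)
    (hγ : ∀ j : ℕ, ((j : K) + 1) * γ (j + 1) = (y + 1 + j) * γ j) (β : ℕ → K)
    (hβ : ∀ n, β n = ∑ p ∈ antidiagonal n, α p.1 * γ p.2) (n : ℕ) :
    ((n : K) + 1) * β (n + 1) =
      ∑ p ∈ antidiagonal n, (1 + y * (1 - x) * ∑ i ∈ range (p.1 + 1), x ^ i) * β p.2 := by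
  set A : K⟦X⟧ := PowerSeries.mk α with hA
  set G : K⟦X⟧ := PowerSeries.mk γ with hG
  set B : K⟦X⟧ := PowerSeries.mk β with hB
  have hBAG : B = A * G := by
    ext n
    simp [hB, hA, hG, PowerSeries.coeff_mul, hβ]
  have e1 : (1 - C x * X) * d⁄dX K A = - C (x * y) * A := by
    ext j
    rw [sub_mul, one_mul, mul_assoc, map_sub, PowerSeries.coeff_C_mul, ← map_neg, PowerSeries.coeff_C_mul]
    cases j with
    | zero =>
      simp [hA, PowerSeries.coeff_derivative]
      have := hα 0
      simp at this
      simpa using this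
    | succ j =>
      rw [PowerSeries.coeff_succ_X_mul]
      simp only [hA, PowerSeries.coeff_derivative, PowerSeries.coeff_mk]
      have := hα (j+1)
      push_cast at this ⊢
      linear_combination this
  have e2 : (1 - X) * d⁄dX K G = C (y + 1) * G := by
    ext j
    rw [sub_mul, one_mul, map_sub, PowerSeries.coeff_C_mul]
    cases j with
    | zero =>
      simp [hG, PowerSeries.coeff_derivative]
      have := hγ 0
      simp at this
      simpa using this
    | succ j =>
      rw [PowerSeries.coeff_succ_X_mul]
      simp only [hG, PowerSeries.coeff_derivative, PowerSeries.coeff_mk]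
      have := hγ (j+1)
      push_cast at this ⊢
      linear_combination this
  set D : K⟦X⟧ := PowerSeries.mk 1 with hD
  set E : K⟦X⟧ := PowerSeries.mk (fun n => ∑ i ∈ range (n + 1), x ^ i) with hE
  have eD : D * (1 - X) = 1 := PowerSeries.mk_one_mul_one_sub_eq_one K
  have eE : (1 - C x * X) * E = D := by
    ext j
    rw [sub_mul, one_mul, mul_assoc, map_sub, PowerSeries.coeff_C_mul]
    cases j with
    | zero => simp [hE, hD]
    | succ j =>
      rw [PowerSeries.coeff_succ_X_mul]
      simp only [hE, hD, PowerSeries.coeff_mk, Pi.one_apply]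
      rw [Finset.sum_range_succ' _ (j+1), Finset.mul_sum]
      simp [pow_succ']
  set P : K⟦X⟧ := PowerSeries.mk (fun n => x ^ n) with hP
  have eP : P * (1 - C x * X) = 1 := by
    ext j
    rw [mul_comm, sub_mul, one_mul, mul_assoc, map_sub, PowerSeries.coeff_C_mul]
    cases j with
    | zero => simp [hP]
    | succ j =>
      rw [PowerSeries.coeff_succ_X_mul]
      simp [hP, PowerSeries.coeff_one, pow_succ']
  have key : d⁄dX K B = (D + C (y * (1 - x)) * E) * B := by
    have h1 : d⁄dX K B = A * d⁄dX K G + G * d⁄dX K A := by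
      rw [hBAG, Derivation.leibniz]; simp [smul_eq_mul]
    have h2 : (1 - X) * (1 - C x * X) * d⁄dX K B =
        (1 - X) * (1 - C x * X) * ((D + C (y * (1 - x)) * E) * B) := by
      rw [h1, hBAG]
      have h3 : C (y * (1 - x)) = C y * (1 - C x) := by simp
      rw [h3]
      simp only [map_mul, map_add, map_one] at e1 e2
      linear_combination (1 - C x * X) * A * e2 + (1 - X) * G * e1
        - (1 - C x * X) * A * G * eD
        - (1 - X) * (C y * (1 - C x)) * A * G * eE - (C y * (1 - C x)) * A * G * eD
    have h4 : (D * P) * ((1 - X) * (1 - C x * X)) = 1 := by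
      linear_combination eD * P * (1 - C x * X) + eP
    calc d⁄dX K B = (D * P) * ((1 - X) * (1 - C x * X)) * d⁄dX K B := by rw [h4, one_mul]
      _ = (D * P) * ((1 - X) * (1 - C x * X) * ((D + C (y * (1 - x)) * E) * B)) := by
        rw [← h2]; ring
      _ = _ := by rw [← mul_assoc (D * P), h4, one_mul]
  have := congrArg (PowerSeries.coeff n) key
  rw [PowerSeries.coeff_derivative, PowerSeries.coeff_mul] at this
  simp only [map_add, PowerSeries.coeff_C_mul, hD, hE, hB, PowerSeries.coeff_mk, Pi.one_apply] at this
  rw [mul_comm, this]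

/-- Eulerian triangle -/
def eulT : ℕ → ℕ → ℕ
  | 0, 0 => 1
  | 0, _ + 1 => 0
  | _ + 1, 0 => 0
  | m + 1, i + 1 => (i + 1) * eulT m (i + 1) + (m + 1 - i) * eulT m i

theorem eulT_zero : ∀ m i, m < i → eulT m i = 0
  | 0, 0, h => by omega
  | 0, _ + 1, _ => rfl
  | _ + 1, 0, h => by omega
  | m + 1, i + 1, h => by
    simp [eulT, eulT_zero m i (by omega), eulT_zero m (i+1) (by omega)]

theorem eulT_pos : ∀ m i, 1 ≤ i → i ≤ m → 0 < eulT m i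
  | 0, i, h, h' => by omega
  | _ + 1, 0, h, _ => by omega
  | 0 + 1, 1, _, _ => by decide
  | 0 + 1, i + 2, _, _ => by omega
  | m + 2, i + 1, h, h' => by
    rw [eulT]
    rcases Nat.lt_or_ge m i with h1 | h1
    · have := eulT_pos (m+1) i (by omega) (by omega)
      have h2 : 0 < m + 1 + 1 - i := by omega
      positivity
    · have := eulT_pos (m+1) (i+1) (by omega) (by omega)
      positivity

theorem eulT_series (m : ℕ) :
    (PowerSeries.mk (fun u => (u : ℚ) ^ m)) * (1 - X) ^ (m + 1)
      = PowerSeries.mk (fun i => (eulT m i : ℚ)) := by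
  induction m with
  | zero =>
    have : (PowerSeries.mk (fun u => (u : ℚ) ^ 0)) = PowerSeries.mk 1 := by ext; simp
    rw [this, zero_add, pow_one, PowerSeries.mk_one_mul_one_sub_eq_one]
    ext i
    cases i <;> simp [eulT, PowerSeries.coeff_one]
  | succ m ih =>
    have hS : (PowerSeries.mk (fun u => (u : ℚ) ^ (m+1))) =
        X * d⁄dX ℚ (PowerSeries.mk (fun u => (u : ℚ) ^ m)) := by
      ext u
      cases u with
      | zero => simp
      | succ u => 
        rw [PowerSeries.coeff_succ_X_mul, PowerSeries.coeff_derivative]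
        simp [pow_succ]
    have hd := congrArg (d⁄dX ℚ) ih
    rw [Derivation.leibniz, Derivation.leibniz_pow] at hd
    simp only [smul_eq_mul, map_sub, Derivation.map_one_eq_zero, PowerSeries.derivative_X,
      Nat.add_sub_cancel, nsmul_eq_mul] at hd
    have : (PowerSeries.mk (fun i => (eulT (m+1) i : ℚ))) =
       X * d⁄dX ℚ (PowerSeries.mk (fun i => (eulT m i : ℚ)))
       - X * (X * d⁄dX ℚ (PowerSeries.mk (fun i => (eulT m i : ℚ))))
       + C ((m:ℚ)+1) * (X * (PowerSeries.mk (fun i => (eulT m i : ℚ)))) := by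
      ext i
      rw [map_add, map_sub, PowerSeries.coeff_C_mul]
      match i with
      | 0 => simp [eulT]
      | 1 => 
        rw [PowerSeries.coeff_succ_X_mul, PowerSeries.coeff_succ_X_mul, PowerSeries.coeff_succ_X_mul]
        simp [PowerSeries.coeff_derivative, eulT]
      | i + 2 =>
        rw [PowerSeries.coeff_succ_X_mul, PowerSeries.coeff_succ_X_mul, PowerSeries.coeff_succ_X_mul, PowerSeries.coeff_succ_X_mul]
        simp only [PowerSeries.coeff_derivative, PowerSeries.coeff_mk, eulT]
        rcases Nat.lt_or_ge m (i+1) with h | h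
        · rw [eulT_zero m (i+1) h, eulT_zero m (i+1+1) (by omega)]; simp
        · rw [Nat.add_sub_add_right]
          push_cast [Nat.cast_sub (show i ≤ m by omega)]
          ring
    rw [this, hS, ← ih]
    rw [Derivation.leibniz, Derivation.leibniz_pow]
    simp only [smul_eq_mul, map_sub, Derivation.map_one_eq_zero, PowerSeries.derivative_X,
      Nat.add_sub_cancel, nsmul_eq_mul, map_add, map_one, map_natCast]
    push_cast
    ring
end gen

def cntLe (d t s : ℕ) : ℕ := 
  ((Fintype.piFinset (fun _ : Fin d => range (t+1))).filter (fun x => ∑ i, x i ≤ s)).card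

section cnt
open PowerSeries

theorem coeff_Xpow_geom (a s : ℕ) : 
   PowerSeries.coeff s ((X : ℚ⟦X⟧) ^ a * PowerSeries.mk 1) = if a ≤ s then 1 else 0 := by
  rw [PowerSeries.coeff_X_pow_mul']; simp

theorem cntLe_eq (d t s : ℕ) : (cntLe d t s : ℚ) = 
    ∑ j ∈ range (d+1), (-1) ^ j * (d.choose j : ℚ) * 
      (if (t+1) * j ≤ s then ((d + (s - (t+1) * j)).choose d : ℚ) else 0) := by
  set g : ℚ⟦X⟧ := ∑ a ∈ range (t+1), X ^ a with hg
  have h1 : PowerSeries.coeff s (g ^ d * PowerSeries.mk 1) = (cntLe d t s : ℚ) := by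
    have : g ^ d = ∑ x ∈ Fintype.piFinset (fun _ : Fin d => range (t+1)), X ^ (∑ i, x i) := by
      rw [← Fin.prod_const, hg, Finset.prod_univ_sum]
      simp [Finset.prod_pow_eq_pow_sum]
    rw [this, Finset.sum_mul, map_sum]
    simp only [coeff_Xpow_geom]
    rw [cntLe, Finset.sum_boole]
  have hgeo : g * (1 - X) = 1 - X ^ (t+1) := by
    rw [hg]; exact geom_sum_mul_neg X (t+1)
  have e1 := PowerSeries.mk_one_mul_one_sub_eq_one ℚ
  have e2 := PowerSeries.mk_add_choose_mul_one_sub_pow_eq_one ℚ d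
  have h2 : g ^ d * PowerSeries.mk 1 = (1 - X ^ (t+1)) ^ d * 
      PowerSeries.mk (fun n => ((d + n).choose d : ℚ)) := by
    rw [← hgeo, mul_pow]
    have : (1 - X : ℚ⟦X⟧) ^ d * PowerSeries.mk (fun n => ((d + n).choose d : ℚ)) = PowerSeries.mk 1 := by
      calc _ = (PowerSeries.mk (fun n => ((d + n).choose d : ℚ)) * (1 - X)^(d+1)) * PowerSeries.mk 1 := by
            rw [pow_succ]; linear_combination (- PowerSeries.mk (fun n => ((d + n).choose d : ℚ)) * (1 - X)^d) * e1
        _ = _ := by rw [e2, one_mul]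
    rw [mul_assoc, this]
  rw [← h1, h2, sub_eq_neg_add, add_pow, Finset.sum_mul, map_sum]
  apply Finset.sum_congr rfl
  intro j hj
  have : (-X ^ (t+1) : ℚ⟦X⟧) ^ j * 1 ^ (d - j) * (d.choose j : ℚ⟦X⟧) * PowerSeries.mk (fun n => ((d + n).choose d : ℚ))
     = C ((-1) ^ j * (d.choose j : ℚ)) * (X ^ ((t+1) * j) * PowerSeries.mk (fun n => ((d + n).choose d : ℚ))) := by
    simp [neg_pow (X ^ (t+1) : ℚ⟦X⟧), pow_mul]; ring
  rw [this, PowerSeries.coeff_C_mul, PowerSeries.coeff_X_pow_mul']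
  simp

end cnt

theorem prod_asc (d a : ℕ) : ∏ i ∈ range d, ((a : ℚ) + 1 + i) = (d.factorial : ℚ) * ((d + a).choose d : ℚ) := by
  have := Nat.ascFactorial_eq_factorial_mul_choose a d
  rw [Nat.ascFactorial_eq_prod_range] at this
  rw [add_comm d a]
  exact_mod_cast this

/-- count at s = k t is polynomial -/
theorem cntLe_poly (d k t : ℕ) (hkd : k ≤ d) : (cntLe d t (k * t) : ℚ) = 
    ∑ j ∈ range (k+1), (-1) ^ j * ((d.choose j : ℚ) / d.factorial) * 
       ∏ i ∈ range d, (((k - j : ℕ) : ℚ) * t - j + 1 + i) := by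
  rw [cntLe_eq]
  rw [← Finset.sum_subset (Finset.range_subset_range.2 (show k + 1 ≤ d + 1 by omega))]
  · apply Finset.sum_congr rfl
    intro j hj
    rw [mul_div_assoc', div_mul_eq_mul_div, mul_div_assoc]
    congr 1
    have hjk : j ≤ k := by simp at hj; omega
    obtain ⟨u, rfl⟩ := Nat.exists_eq_add_of_le hjk
    rw [Nat.add_sub_cancel_left]
    have hd : (d.factorial : ℚ) ≠ 0 := by positivity
    have hexp : (t+1) * j = t * j + j := by ring
    have hexp2 : (j+u) * t = t * j + u * t := by ring
    split_ifs with h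
    · have hle : j ≤ u * t := by omega
      rw [show (j+u) * t - (t+1)*j = u * t - j by omega]
      have := prod_asc d (u * t - j)
      rw [Nat.cast_sub hle] at this
      push_cast at this
      rw [this]; field_simp
    · have hlt : u * t < j := by omega
      symm
      rw [div_eq_zero_iff]; left
      apply Finset.prod_eq_zero (i := j - u * t - 1)
      · simp; omega
      · have : ((j - u * t - 1 : ℕ) : ℚ) = j - u * t - 1 := by
          rw [Nat.cast_sub (by omega), Nat.cast_sub (by omega)]; push_cast; ring
        rw [this]; ring
  · intro j hj hj'
    rw [if_neg, mul_zero]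
    simp at hj hj'
    have : (k+1) * t ≤ j * t := Nat.mul_le_mul_right _ (by omega)
    nlinarith

theorem halfOpen_eq (k n t : ℕ) (hk : 1 ≤ k) : 
   (halfOpenCount k n t : ℚ) = cntLe (n-1) t (k * t) - cntLe (n-1) t ((k-1) * t) := by
  obtain ⟨k, rfl⟩ := Nat.exists_eq_add_of_le' hk
  rw [Nat.add_sub_cancel]
  set d := n - 1 with hd
  set S := Fintype.piFinset (fun _ : Fin d => range (t+1)) with hS
  have hle : k * t ≤ (k+1) * t := Nat.mul_le_mul_right _ (by omega)
  have hcard : halfOpenCount (k+1) n t = 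
     (S.filter (fun x => k * t < ∑ i, x i ∧ ∑ i, x i ≤ (k+1) * t)).card := by
    unfold halfOpenCount
    rw [← Fintype.card_coe, ← Nat.card_eq_fintype_card]
    symm
    refine Nat.card_congr ⟨fun x => ⟨fun i => (x.1 i : ℤ), ?_⟩, fun x => ⟨fun i => (x.1 i).toNat, ?_⟩, ?_, ?_⟩
    · have := Finset.mem_filter.1 x.2
      simp only [hS, Fintype.mem_piFinset, Finset.mem_range] at this
      refine ⟨fun i => ⟨by positivity, by have := this.1 i; dsimp only; omega⟩, ?_, ?_⟩
      · have := this.2.1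
        push_cast
        zify at this
        simpa using this
      · have := this.2.2
        dsimp only
        exact_mod_cast this
    · have h := x.2
      have hs : ((∑ i, (x.1 i).toNat : ℕ) : ℤ) = ∑ i, x.1 i := by
        push_cast
        apply Finset.sum_congr rfl
        intro i _
        exact Int.toNat_of_nonneg (h.1 i).1
      simp only [hS, Finset.mem_filter, Fintype.mem_piFinset, Finset.mem_range]
      refine ⟨fun i => by have := h.1 i; omega, ?_, ?_⟩
      · zify at hs ⊢
        rw [hs]
        have := h.2.1
        push_cast at this
        simpa using this
      · zify at hs ⊢
        rw [hs]
        have := h.2.2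
        push_cast at this
        simpa using this
    · intro x; ext i; simp
    · intro x; ext i
      simpa using (x.2.1 i).1
  have : cntLe d t ((k+1) * t) = halfOpenCount (k+1) n t + cntLe d t (k * t) := by
    rw [hcard, cntLe, cntLe, ← hS, ← Finset.card_union_of_disjoint]
    · congr 1
      ext x
      simp only [Finset.mem_union, Finset.mem_filter]
      constructor
      · rintro ⟨a, b⟩
        rcases Nat.lt_or_ge (k * t) (∑ i, x i) with h | h
        · left; exact ⟨a, h, b⟩
        · right; exact ⟨a, h⟩
      · rintro (⟨a, b, c⟩ | ⟨a, b⟩)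
        · exact ⟨a, c⟩
        · exact ⟨a, b.trans hle⟩
    · rw [Finset.disjoint_left]
      intro x hx hx'
      simp only [Finset.mem_filter] at hx hx'
      omega
  rw [this]; push_cast; ring

section final
open Polynomial

noncomputable def alT (j : ℕ) : ℚ[X] := C ((j.factorial : ℚ)⁻¹) * ∏ i ∈ range j, (X - C (i : ℚ))
noncomputable def gaT (j : ℕ) : ℚ[X] := C ((j.factorial : ℚ)⁻¹) * ∏ i ∈ range j, (X + 1 + C (i : ℚ))
noncomputable def fT (d j : ℕ) : ℚ[X] := alT j * gaT (d - j)

theorem alT_succ (j : ℕ) : ((j : ℚ[X]) + 1) * alT (j+1) = (X - (j : ℚ[X])) * alT j := by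
  have h : ((j : ℚ[X]) + 1) * C (((j+1).factorial : ℚ)⁻¹) = C ((j.factorial : ℚ)⁻¹) := by
    rw [show (j : ℚ[X]) + 1 = C ((j : ℚ) + 1) by simp, ← C_mul]
    congr 1
    rw [Nat.factorial_succ]; push_cast
    field_simp
  rw [alT, alT, Finset.prod_range_succ, ← mul_assoc, h]
  simp; ring

theorem gaT_succ (j : ℕ) : ((j : ℚ[X]) + 1) * gaT (j+1) = (X + 1 + (j : ℚ[X])) * gaT j := by
  have h : ((j : ℚ[X]) + 1) * C (((j+1).factorial : ℚ)⁻¹) = C ((j.factorial : ℚ)⁻¹) := by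
    rw [show (j : ℚ[X]) + 1 = C ((j : ℚ) + 1) by simp, ← C_mul]
    congr 1
    rw [Nat.factorial_succ]; push_cast
    field_simp
  rw [gaT, gaT, Finset.prod_range_succ, ← mul_assoc, h]
  simp; ring

noncomputable def bT (d : ℕ) : ℚ[X][X] :=
  ∑ p ∈ antidiagonal d, (C ((-X) ^ p.1) * (alT p.1).map C) * (gaT p.2).map C

theorem bT_rec (n : ℕ) : ((n : ℚ[X][X]) + 1) * bT (n+1) =
    ∑ p ∈ antidiagonal n, (1 + X * (1 - C X) * ∑ i ∈ range (p.1 + 1), (C X) ^ i) * bT p.2 := by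
  apply gen_recurrence (C X : ℚ[X][X]) X (fun j => C ((-X) ^ j) * (alT j).map C)
    (fun j => (gaT j).map C) _ _ bT (fun n => rfl)
  · intro j
    have := congrArg (Polynomial.map (C : ℚ →+* ℚ[X])) (alT_succ j)
    simp only [Polynomial.map_mul, Polynomial.map_add, Polynomial.map_sub, Polynomial.map_natCast,
      Polynomial.map_one, Polynomial.map_X] at this
    rw [pow_succ, C_mul, C_neg]
    linear_combination (C ((-X)^j)) * (- C X) * this
  · intro j
    have := congrArg (Polynomial.map (C : ℚ →+* ℚ[X])) (gaT_succ j)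
    simpa only [Polynomial.map_mul, Polynomial.map_add, Polynomial.map_sub, Polynomial.map_natCast,
      Polynomial.map_one, Polynomial.map_X] using this

theorem bT_coeff (d m j : ℕ) (hj : j ≤ d) : ((bT d).coeff m).coeff j = (-1) ^ j * (fT d j).coeff m := by
  rw [bT, Finset.Nat.sum_antidiagonal_eq_sum_range_succ_mk, finsetSum_coeff, finsetSum_coeff]
  rw [Finset.sum_eq_single j]
  · rw [mul_assoc, ← Polynomial.map_mul, coeff_C_mul, coeff_map, neg_pow, coeff_mul_C]
    rw [← C_1, ← C_neg, ← C_pow, coeff_C_mul, coeff_X_pow_self, fT]; ring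
  · intro i _ hij
    rw [mul_assoc, ← Polynomial.map_mul, coeff_C_mul, coeff_map, neg_pow, coeff_mul_C]
    rw [← C_1, ← C_neg, ← C_pow, coeff_C_mul, coeff_X_pow, if_neg (Ne.symm hij)]; ring
  · intro h; simp at h; omega

def Good (d : ℕ) (r : ℕ → ℚ[X]) : Prop :=
  (∀ m, (bT d).coeff m = (1 - X) ^ m * r m) ∧ (∀ m l, 0 ≤ (r m).coeff l) ∧
  (∀ m l, 1 ≤ m → m + l ≤ d → 0 < (r m).coeff l) ∧ (d = 0 → r 0 = 1)

theorem geom_coeff (i l : ℕ) : (∑ a ∈ range (i+1), (X : ℚ[X]) ^ a).coeff l = if l ≤ i then 1 else 0 := by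
  simp [finsetSum_coeff, coeff_X_pow]

theorem mul_coeff_nonneg' {p q : ℚ[X]} (hp : ∀ l, 0 ≤ p.coeff l) (hq : ∀ l, 0 ≤ q.coeff l) (l : ℕ) :
    0 ≤ (p * q).coeff l := by
  rw [coeff_mul]; exact Finset.sum_nonneg fun x _ => mul_nonneg (hp _) (hq _)

theorem mul_coeff_pos' {p q : ℚ[X]} (hp : ∀ l, 0 ≤ p.coeff l) (hq : ∀ l, 0 ≤ q.coeff l) (a b : ℕ)
    (ha : 0 < p.coeff a) (hb : 0 < q.coeff b) : 0 < (p * q).coeff (a + b) := by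
  rw [coeff_mul]
  exact Finset.sum_pos' (fun x _ => mul_nonneg (hp _) (hq _)) ⟨(a, b), by simp, mul_pos ha hb⟩

theorem good_exists (d : ℕ) : ∃ r, Good d r := by
  induction d using Nat.strong_induction_on with
  | _ d ih =>
  cases d with
  | zero =>
    refine ⟨fun m => if m = 0 then 1 else 0, ?_, ?_, ?_, ?_⟩
    · intro m
      have : bT 0 = 1 := by simp [bT, alT, gaT]
      rw [this, coeff_one]
      split_ifs with h <;> simp [h]
    · intro m l
      dsimp only
      split_ifs
      · rw [coeff_one]; split_ifs <;> norm_num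
      · simp
    · intro m l h1 h2; omega
    · simp
  | succ n =>
    choose! r hr using ih
    set g : ℕ → ℚ[X] := fun i => ∑ a ∈ range (i+1), (X : ℚ[X]) ^ a with hg
    have hg0 : ∀ i l, 0 ≤ (g i).coeff l := by
      intro i l; rw [hg]; dsimp only; rw [geom_coeff]; split_ifs <;> norm_num
    -- the next row, before division by n+1
    set s : ℕ → ℚ[X] := fun m => ∑ p ∈ antidiagonal n,
      (r p.2 m + if m = 0 then 0 else g p.1 * r p.2 (m-1)) with hs
    have hterm : ∀ m, ∀ p ∈ antidiagonal n, ∀ l,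
        0 ≤ (r p.2 m + if m = 0 then 0 else g p.1 * r p.2 (m-1)).coeff l := by
      intro m p hp l
      have hp2 : p.2 < n + 1 := by simp at hp; omega
      rw [coeff_add]
      apply add_nonneg ((hr _ hp2).2.1 _ _)
      split_ifs
      · simp
      · exact mul_coeff_nonneg' (hg0 _) ((hr _ hp2).2.1 _) _
    have hn : (0 : ℚ) < ((n : ℚ) + 1)⁻¹ := by positivity
    refine ⟨fun m => C (((n : ℚ) + 1)⁻¹) * s m, ?_, ?_, ?_, ?_⟩
    · intro m
      have h1 : (C ((n : ℚ) + 1)) * (bT (n+1)).coeff m = (1 - X) ^ m * s m := by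
        have := congrArg (fun q => Polynomial.coeff q m) (bT_rec n)
        rw [show (n : ℚ[X][X]) + 1 = C (C ((n : ℚ) + 1)) by simp, coeff_C_mul] at this
        rw [this, finsetSum_coeff, hs, Finset.mul_sum]
        apply Finset.sum_congr rfl
        intro p hp
        have hp2 : p.2 < n + 1 := by simp at hp; omega
        have hx : (1 + X * (1 - C X) * ∑ i ∈ range (p.1 + 1), (C X : ℚ[X][X]) ^ i) * bT p.2
            = bT p.2 + C ((1 - X) * g p.1) * (X * bT p.2) := by
          rw [hg]; simp only [C_mul, C_sub, C_1, map_sum, C_pow]; ring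
        rw [hx, coeff_add, coeff_C_mul]
        cases m with
        | zero => simp [(hr _ hp2).1]
        | succ m =>
          rw [coeff_X_mul, (hr _ hp2).1, (hr _ hp2).1]
          simp; ring
      have h2 : C (((n : ℚ) + 1)⁻¹) * C ((n : ℚ) + 1) = 1 := by
        rw [← C_mul, inv_mul_cancel₀ (by positivity), C_1]
      linear_combination C (((n : ℚ) + 1)⁻¹) * h1 - (bT (n+1)).coeff m * h2
    · intro m l
      rw [coeff_C_mul]
      apply mul_nonneg hn.le
      rw [hs, finsetSum_coeff]
      exact Finset.sum_nonneg fun p hp => hterm m p hp l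
    · intro m l hm hml
      rw [coeff_C_mul]
      apply mul_pos hn
      rw [hs, finsetSum_coeff]
      apply Finset.sum_pos' (fun p hp => hterm m p hp l)
      rcases Nat.lt_or_ge 1 m with h | h
      · refine ⟨(0, n), by simp, ?_⟩
        rw [if_neg (by omega), coeff_add]
        apply add_pos_of_nonneg_of_pos ((hr n (by omega)).2.1 _ _)
        have : g 0 = 1 := by simp [hg]
        rw [this, one_mul]
        exact (hr n (by omega)).2.2.1 _ _ (by omega) (by omega)
      · have hm1 : m = 1 := by omega
        subst hm1
        refine ⟨(n, 0), by simp, ?_⟩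
        rw [if_neg (by omega), coeff_add]
        apply add_pos_of_nonneg_of_pos ((hr 0 (by omega)).2.1 _ _)
        rw [Nat.sub_self, (hr 0 (by omega)).2.2.2 rfl, mul_one, hg]
        dsimp only
        rw [geom_coeff, if_pos (by omega)]
        norm_num
    · intro h; omega

noncomputable def iT (d k : ℕ) : ℚ[X] :=
  ∑ j ∈ range (k+1), (-1) ^ j * (fT d j).comp (C ((k - j : ℕ) : ℚ) * X)

theorem fT_eval (d j : ℕ) (hj : j ≤ d) (y : ℚ) : (fT d j).eval y =
    ((d.choose j : ℚ) / d.factorial) * ∏ i ∈ range d, (y - j + 1 + i) := by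
  obtain ⟨e, rfl⟩ := Nat.exists_eq_add_of_le hj
  rw [Finset.prod_range_add, fT, alT, gaT, Nat.add_sub_cancel_left]
  simp only [eval_mul, eval_C, eval_prod, eval_sub, eval_add, eval_X, eval_one]
  rw [← Finset.prod_range_reflect (fun i => y - (i : ℚ)) j]
  have h1 : ∏ i ∈ range j, (y - ((j - 1 - i : ℕ) : ℚ)) = ∏ i ∈ range j, (y - j + 1 + i) := by
    apply Finset.prod_congr rfl
    intro i hi
    simp at hi
    rw [Nat.cast_sub (by omega), Nat.cast_sub (by omega)]; push_cast; ring
  have h2 : ∏ i ∈ range e, (y - (j : ℚ) + 1 + ((j + i : ℕ) : ℚ)) = ∏ i ∈ range e, (y + 1 + (i : ℚ)) := by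
    apply Finset.prod_congr rfl
    intro i hi
    push_cast; ring
  rw [h1, h2]
  have h3 : ((j + e).choose j : ℚ) / (j+e).factorial = (j.factorial : ℚ)⁻¹ * (e.factorial : ℚ)⁻¹ := by
    have := Nat.add_choose_mul_factorial_mul_factorial j e
    rw [← Nat.choose_symm_add] at this
    have h4 : (((j+e).choose j : ℚ)) * j.factorial * e.factorial = (j+e).factorial := by exact_mod_cast this
    rw [← h4]
    have : ((j+e).choose j : ℚ) ≠ 0 := by
      exact_mod_cast (Nat.choose_pos (by omega)).ne'
    field_simp
  rw [h3]; ring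

theorem iT_eval (d k t : ℕ) (hkd : k ≤ d) : (iT d k).eval (t : ℚ) = cntLe d t (k * t) := by
  rw [cntLe_poly d k t hkd, iT, eval_finsetSum]
  apply Finset.sum_congr rfl
  intro j hj
  simp at hj
  rw [eval_mul, eval_comp, fT_eval d j (by omega)]
  simp [mul_assoc]

theorem iT_coeff (d k m : ℕ) (hkd : k ≤ d) : (iT d k).coeff m =
    PowerSeries.coeff k (PowerSeries.mk (fun u => (u : ℚ) ^ m) * ((bT d).coeff m : PowerSeries ℚ)) := by
  rw [mul_comm, PowerSeries.coeff_mul, Finset.Nat.sum_antidiagonal_eq_sum_range_succ_mk, iT, finsetSum_coeff]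
  apply Finset.sum_congr rfl
  intro j hj
  simp at hj
  rw [← C_1, ← C_neg, ← C_pow, coeff_C_mul, comp_C_mul_X_coeff]
  simp only [Polynomial.coeff_coe, PowerSeries.coeff_mk]
  rw [bT_coeff d m j (by omega)]; ring

theorem fT_natDegree (d j : ℕ) (hj : j ≤ d) : (fT d j).natDegree ≤ d := by
  have h1 : (alT j).natDegree ≤ j := by
    refine (natDegree_C_mul_le _ _).trans ((natDegree_prod_le _ _).trans ?_)
    refine (Finset.sum_le_card_nsmul _ _ 1 fun i _ => (natDegree_X_sub_C_le _)).trans (by simp)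
  have h2 : (gaT (d-j)).natDegree ≤ d - j := by
    refine (natDegree_C_mul_le _ _).trans ((natDegree_prod_le _ _).trans ?_)
    refine (Finset.sum_le_card_nsmul _ _ 1 fun i _ => ?_).trans (by simp)
    compute_degree
  refine natDegree_mul_le.trans ?_
  omega

theorem iT_natDegree (d k : ℕ) (hkd : k ≤ d) : (iT d k).natDegree ≤ d := by
  apply natDegree_sum_le_of_forall_le
  intro j hj
  simp at hj
  rw [← C_1, ← C_neg, ← C_pow]
  refine (natDegree_C_mul_le _ _).trans (natDegree_comp_le.trans ?_)
  have h1 := fT_natDegree d j (by omega)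
  have h2 : (C ((k - j : ℕ) : ℚ) * X).natDegree ≤ 1 := by
    compute_degree
  nlinarith

theorem diff_coeff_pos (d k m : ℕ) (hk : 1 ≤ k) (hkd : k ≤ d) (hm : 1 ≤ m) (hmd : m ≤ d) :
    0 < (iT d k - iT d (k-1)).coeff m := by
  obtain ⟨k, rfl⟩ := Nat.exists_eq_add_of_le' hk
  obtain ⟨r, hr1, hr2, hr3, -⟩ := good_exists d
  rw [Nat.add_sub_cancel, coeff_sub, iT_coeff d _ m hkd, iT_coeff d k m (by omega)]
  set S := PowerSeries.mk (fun u => (u : ℚ) ^ m) with hS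
  set b : PowerSeries ℚ := ((bT d).coeff m : PowerSeries ℚ) with hb
  have h1 : PowerSeries.coeff (k+1) (S * b) - PowerSeries.coeff k (S * b)
      = PowerSeries.coeff (k+1) ((1 - PowerSeries.X) * (S * b)) := by
    rw [sub_mul, one_mul, map_sub, PowerSeries.coeff_succ_X_mul]
  have h2 : (1 - PowerSeries.X) * (S * b) =
      PowerSeries.mk (fun i => (eulT m i : ℚ)) * (r m : PowerSeries ℚ) := by
    rw [← eulT_series, hb, hr1]
    push_cast
    ring
  rw [h1, h2, PowerSeries.coeff_mul]
  apply Finset.sum_pos'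
  · intro p _
    simp only [PowerSeries.coeff_mk, Polynomial.coeff_coe]
    exact mul_nonneg (by positivity) (hr2 _ _)
  · refine ⟨(min m (k+1), k + 1 - min m (k+1)), by simp, ?_⟩
    simp only [PowerSeries.coeff_mk, Polynomial.coeff_coe]
    apply mul_pos
    · exact_mod_cast eulT_pos _ _ (by omega) (by omega)
    · exact hr3 _ _ hm (by omega)
end final

theorem halfOpen_ehrhart_positive (k n : ℕ) (hk : 1 < k) (hkn : k ≤ n - 1) :
    ∃ p : Polynomial ℚ, p.natDegree = n - 1 ∧
      (∀ t : ℕ, (halfOpenCount k n t : ℚ) = p.eval (t : ℚ)) ∧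
      (∀ m, 1 ≤ m → m ≤ n - 1 → 0 < p.coeff m) ∧ p.coeff 0 = 0 := by
  have heval : ∀ t : ℕ, (halfOpenCount k n t : ℚ) =
      (iT (n-1) k - iT (n-1) (k-1)).eval (t : ℚ) := by
    intro t
    rw [halfOpen_eq k n t (by omega), Polynomial.eval_sub, iT_eval _ _ _ hkn,
      iT_eval _ _ _ (by omega)]
  have hpos := fun m (h1 : 1 ≤ m) (h2 : m ≤ n - 1) =>
    diff_coeff_pos (n-1) k m (by omega) hkn h1 h2
  refine ⟨iT (n-1) k - iT (n-1) (k-1), ?_, heval, hpos, ?_⟩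
  · apply le_antisymm
    · refine (Polynomial.natDegree_sub_le _ _).trans (max_le ?_ ?_)
      · exact iT_natDegree _ _ hkn
      · exact iT_natDegree _ _ (by omega)
    · exact Polynomial.le_natDegree_of_ne_zero (hpos _ (by omega) le_rfl).ne'
  · have h0 := heval 0
    have : halfOpenCount k n 0 = 0 := by
      unfold halfOpenCount
      rw [Nat.card_eq_zero]
      left
      constructor
      rintro ⟨x, hx, h1, h2⟩
      simp at h1 h2
      omega
    rw [this] at h0
    rw [Polynomial.coeff_zero_eq_eval_zero]
    simpa using h0.symm
end
end

section
/- The Ehrhart polynomial of the independence polytope of the uniform matroid U_{k,n}, i.e. the polynomial p with p(t) = #{x ∈ {0,...,t}^n : Σ x_i ≤ kt} for all integers t ≥ 0, has constant term 1 and all other coefficients strictly positive, for 1 ≤ k ≤ n. -/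
noncomputable section

open Finset

abbrev RR := PowerSeries ℚ

def triG : ℕ → Polynomial RR × Polynomial RR × Polynomial RR
  | 0 => (1, 1, 1)
  | n + 1 =>
    (Polynomial.C (PowerSeries.C ((n + 1 : ℚ)⁻¹)) * ((triG n).2.1 + Polynomial.X * (triG n).2.2),
     (triG n).2.1 + Polynomial.C (PowerSeries.C ((n + 1 : ℚ)⁻¹)) *
        ((triG n).2.1 + Polynomial.X * (triG n).2.2),
     Polynomial.C PowerSeries.X * (triG n).2.2 + ((triG n).2.1 +
        Polynomial.C (PowerSeries.C ((n + 1 : ℚ)⁻¹)) *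
        ((triG n).2.1 + Polynomial.X * (triG n).2.2)))

def gg (n : ℕ) := (triG n).1
def ga (n : ℕ) := (triG n).2.1
def gb (n : ℕ) := (triG n).2.2

lemma gg_zero : gg 0 = 1 := rfl
lemma ga_zero : ga 0 = 1 := rfl
lemma gb_zero : gb 0 = 1 := rfl
lemma gg_succ (n : ℕ) : gg (n+1) =
    Polynomial.C (PowerSeries.C ((n + 1 : ℚ)⁻¹)) * (ga n + Polynomial.X * gb n) := rfl
lemma ga_succ (n : ℕ) : ga (n+1) = ga n + gg (n+1) := rfl
lemma gb_succ (n : ℕ) : gb (n+1) = Polynomial.C PowerSeries.X * gb n + ga (n+1) := rfl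

lemma g_deg (n : ℕ) : (gg n).natDegree ≤ n ∧ (ga n).natDegree ≤ n ∧ (gb n).natDegree ≤ n := by
  induction n with
  | zero => simp [gg_zero, ga_zero, gb_zero]
  | succ n ih =>
    obtain ⟨h1, h2, h3⟩ := ih
    have a1 : (gg (n+1)).natDegree ≤ n + 1 := by
      rw [gg_succ]
      refine (Polynomial.natDegree_C_mul_le _ _).trans ?_
      refine Polynomial.natDegree_add_le_of_degree_le (by omega) ?_
      refine Polynomial.natDegree_mul_le.trans ?_
      have := Polynomial.natDegree_X_le (R := RR)
      omega
    have a2 : (ga (n+1)).natDegree ≤ n + 1 := by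
      rw [ga_succ]
      exact Polynomial.natDegree_add_le_of_degree_le (by omega) a1
    refine ⟨a1, a2, ?_⟩
    rw [gb_succ]
    refine Polynomial.natDegree_add_le_of_degree_le ?_ a2
    exact (Polynomial.natDegree_C_mul_le _ _).trans (by omega)

def PNN (P : Polynomial RR) : Prop := ∀ m a, 0 ≤ PowerSeries.coeff a (P.coeff m)

lemma PNN_add {P Q : Polynomial RR} (hP : PNN P) (hQ : PNN Q) : PNN (P + Q) := by
  intro m a
  have := hP m a
  have := hQ m a
  simp only [Polynomial.coeff_add, map_add]; positivity

lemma PNN_one : PNN 1 := by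
  intro m a
  rw [Polynomial.coeff_one]
  split_ifs
  · rw [PowerSeries.coeff_one]; split_ifs <;> simp
  · simp

lemma PNN_C {c : ℚ} (hc : 0 ≤ c) {P : Polynomial RR} (hP : PNN P) :
    PNN (Polynomial.C (PowerSeries.C c) * P) := by
  intro m a
  rw [Polynomial.coeff_C_mul, PowerSeries.coeff_C_mul]
  exact mul_nonneg hc (hP m a)

lemma PNN_X {P : Polynomial RR} (hP : PNN P) : PNN (Polynomial.X * P) := by
  intro m a
  cases m with
  | zero => simp
  | succ m => rw [Polynomial.coeff_X_mul]; exact hP m a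

lemma PNN_CX {P : Polynomial RR} (hP : PNN P) : PNN (Polynomial.C PowerSeries.X * P) := by
  intro m a
  rw [Polynomial.coeff_C_mul]
  cases a with
  | zero => simp
  | succ a => rw [PowerSeries.coeff_succ_X_mul]; exact hP m a

lemma g_nn (n : ℕ) : PNN (gg n) ∧ PNN (ga n) ∧ PNN (gb n) := by
  induction n with
  | zero => simp [gg_zero, ga_zero, gb_zero, PNN_one]
  | succ n ih =>
    obtain ⟨h1, h2, h3⟩ := ih
    have a1 : PNN (gg (n+1)) := by
      rw [gg_succ]; exact PNN_C (by positivity) (PNN_add h2 (PNN_X h3))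
    have a2 : PNN (ga (n+1)) := PNN_add h2 a1
    exact ⟨a1, a2, PNN_add (PNN_CX h3) a2⟩

lemma g_pos (n : ℕ) : (∀ m ≤ n, 0 < PowerSeries.coeff 0 ((gg n).coeff m)) ∧
    (∀ m ≤ n, 0 < PowerSeries.coeff 0 ((ga n).coeff m)) ∧
    (∀ m ≤ n, 0 < PowerSeries.coeff 0 ((gb n).coeff m)) := by
  induction n with
  | zero => simp [gg_zero, ga_zero, gb_zero]
  | succ n ih =>
    obtain ⟨h1, h2, h3⟩ := ih
    obtain ⟨n1, n2, n3⟩ := g_nn n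
    have a1 : ∀ m ≤ n+1, 0 < PowerSeries.coeff 0 ((gg (n+1)).coeff m) := by
      intro m hm
      rw [gg_succ, Polynomial.coeff_C_mul, PowerSeries.coeff_C_mul]
      refine mul_pos (by positivity) ?_
      rw [Polynomial.coeff_add, map_add]
      cases m with
      | zero =>
        have := h2 0 (by omega)
        simpa using this
      | succ m =>
        rw [Polynomial.coeff_X_mul]
        exact add_pos_of_nonneg_of_pos (n2 _ _) (h3 m (by omega))
    have a2 : ∀ m ≤ n+1, 0 < PowerSeries.coeff 0 ((ga (n+1)).coeff m) := by
      intro m hm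
      rw [ga_succ, Polynomial.coeff_add, map_add]
      exact add_pos_of_nonneg_of_pos (n2 _ _) (a1 m hm)
    refine ⟨a1, a2, ?_⟩
    intro m hm
    rw [gb_succ, Polynomial.coeff_add, map_add]
    exact add_pos_of_nonneg_of_pos (PNN_CX n3 _ _) (a2 m hm)

/-- power series in `w` over `RR` -/
def uu : PowerSeries RR := PowerSeries.mk 1
def vv : PowerSeries RR := PowerSeries.mk fun n => (PowerSeries.X : RR) ^ n
def zw : PowerSeries RR := 1 - PowerSeries.C (PowerSeries.X : RR) * PowerSeries.X
def FF (s : ℕ) : PowerSeries RR := zw ^ s * uu ^ (s+1)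

lemma uu_mul : uu * (1 - PowerSeries.X) = 1 := PowerSeries.mk_one_mul_one_sub_eq_one RR

lemma vv_mul : vv * zw = 1 := by
  unfold vv zw
  ext1 n
  rw [mul_sub, mul_one, mul_left_comm, map_sub, PowerSeries.coeff_C_mul]
  cases n with
  | zero => simp
  | succ n =>
    rw [PowerSeries.coeff_succ_mul_X]; simp [PowerSeries.coeff_one, pow_succ']

lemma coeff_uu (f : PowerSeries RR) (n : ℕ) :
    PowerSeries.coeff (n+1) (uu * f) = PowerSeries.coeff n (uu * f) + PowerSeries.coeff (n+1) f := by
  have h : uu * f = PowerSeries.X * (uu * f) + f := by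
    linear_combination f * uu_mul
  conv_lhs => rw [h]
  rw [map_add, PowerSeries.coeff_succ_X_mul]

lemma coeff_vv (f : PowerSeries RR) (n : ℕ) :
    PowerSeries.coeff (n+1) (vv * f) =
      PowerSeries.X * PowerSeries.coeff n (vv * f) + PowerSeries.coeff (n+1) f := by
  have h : vv * f = PowerSeries.C (PowerSeries.X : RR) * (PowerSeries.X * (vv * f)) + f := by
    have := vv_mul
    unfold zw at this
    linear_combination f * this
  conv_lhs => rw [h]
  rw [map_add, PowerSeries.coeff_C_mul, PowerSeries.coeff_succ_X_mul]

lemma ps_dmul {R : Type*} [CommRing R] (f g : PowerSeries R) :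
    PowerSeries.derivative R (f * g) =
      f * PowerSeries.derivative R g + g * PowerSeries.derivative R f := by
  rw [Derivation.leibniz]; simp only [smul_eq_mul]

lemma ps_dpow {R : Type*} [CommRing R] (f : PowerSeries R) (n : ℕ) :
    PowerSeries.derivative R (f ^ (n + 1)) =
      ((n + 1 : ℕ) : PowerSeries R) * f ^ n * PowerSeries.derivative R f := by
  rw [PowerSeries.derivative_pow]; simp

lemma ps_dX {R : Type*} [CommRing R] :
    PowerSeries.derivative R (1 - PowerSeries.X) = -1 := by
  simp [PowerSeries.derivative_X]

lemma ps_dCX {R : Type*} [CommRing R] (c : R) :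
    PowerSeries.derivative R (1 - PowerSeries.C c * PowerSeries.X) = - PowerSeries.C c := by
  rw [map_sub, ps_dmul, PowerSeries.derivative_C, PowerSeries.derivative_X]
  simp

lemma ps_d1 {R : Type*} [CommRing R] :
    PowerSeries.derivative R 1 = 0 := by
  simp

lemma FF_deriv (s : ℕ) : PowerSeries.derivative RR (FF s) = uu * FF s +
    PowerSeries.C ((s : RR) * (1 - PowerSeries.X)) * (vv * (uu * FF s)) := by
  have du : PowerSeries.derivative RR uu = uu ^ 2 := by
    have h := congrArg (PowerSeries.derivative RR) uu_mul
    rw [ps_dmul, ps_dX, ps_d1] at h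
    linear_combination uu * h - (PowerSeries.derivative RR uu) * uu_mul
  have dz : PowerSeries.derivative RR zw = - PowerSeries.C (PowerSeries.X : RR) := by
    exact ps_dCX _
  have hz : ∀ s : ℕ, PowerSeries.derivative RR (zw ^ s) = - (s:PowerSeries RR) * PowerSeries.C (PowerSeries.X : RR) * vv * zw ^ s := by
    intro s
    cases s with
    | zero => rw [pow_zero, ps_d1]; simp
    | succ s =>
      rw [ps_dpow, dz]
      linear_combination ((s+1:ℕ):PowerSeries RR) * PowerSeries.C (PowerSeries.X : RR) * zw ^ s * vv_mul
  unfold FF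
  rw [ps_dmul, hz, ps_dpow, du]
  simp only [map_mul, map_sub, map_natCast, map_one]
  have e1 := uu_mul
  have e2 := vv_mul
  have e3 : uu - PowerSeries.C (PowerSeries.X : RR) * vv = (1 - PowerSeries.C (PowerSeries.X : RR)) * (uu * vv) := by
    unfold zw at e2
    linear_combination (PowerSeries.C (PowerSeries.X : RR)) * vv * e1 - uu * e2
  push_cast
  linear_combination (s:PowerSeries RR) * zw^s * uu^(s+1) * e3

lemma g_eval (s n : ℕ) :
    (gg n).eval ((s : RR) * (1 - PowerSeries.X)) = PowerSeries.coeff n (FF s) ∧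
    (ga n).eval ((s : RR) * (1 - PowerSeries.X)) = PowerSeries.coeff n (uu * FF s) ∧
    (gb n).eval ((s : RR) * (1 - PowerSeries.X)) = PowerSeries.coeff n (vv * (uu * FF s)) := by
  induction n with
  | zero => simp [gg_zero, ga_zero, gb_zero, FF, uu, vv, zw]
  | succ n ih =>
    obtain ⟨h1, h2, h3⟩ := ih
    have a1 : (gg (n+1)).eval ((s : RR) * (1 - PowerSeries.X)) = PowerSeries.coeff (n+1) (FF s) := by
      rw [gg_succ]
      have := congrArg (PowerSeries.coeff n) (FF_deriv s)
      rw [PowerSeries.coeff_derivative, map_add, PowerSeries.coeff_C_mul, ← h2, ← h3] at this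
      rw [Polynomial.eval_mul, Polynomial.eval_add, Polynomial.eval_mul, Polynomial.eval_X,
        Polynomial.eval_C, ← this, mul_comm, mul_assoc]
      have hc : ((n:RR) + 1) * PowerSeries.C ((n+1:ℚ)⁻¹) = 1 := by
        have : ((n:RR)+1) = PowerSeries.C (n+1:ℚ) := by simp
        rw [this, ← map_mul, mul_inv_cancel₀ (by positivity), map_one]
      rw [hc, mul_one]
    have a2 : (ga (n+1)).eval ((s : RR) * (1 - PowerSeries.X)) = PowerSeries.coeff (n+1) (uu * FF s) := by
      rw [ga_succ, Polynomial.eval_add, a1, h2, coeff_uu]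
    refine ⟨a1, a2, ?_⟩
    rw [gb_succ, Polynomial.eval_add, a2, Polynomial.eval_mul, Polynomial.eval_C, h3, coeff_vv]

def Rm (m : ℕ) : RR := PowerSeries.mk fun r => (r : ℚ) ^ m
def Bm (m : ℕ) : RR := (1 - PowerSeries.X) ^ (m + 1) * Rm m
def Em (m : ℕ) : RR := (1 - PowerSeries.X) ^ m * Rm m

lemma Rm_succ (m : ℕ) : Rm (m+1) = PowerSeries.X * PowerSeries.derivative ℚ (Rm m) := by
  ext r
  cases r with
  | zero => simp [Rm]
  | succ r =>
    rw [PowerSeries.coeff_succ_X_mul, PowerSeries.coeff_derivative]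
    simp [Rm, pow_succ]

lemma Bm_succ (m : ℕ) : Bm (m+1) = PowerSeries.X * ((1 - PowerSeries.X) *
    PowerSeries.derivative ℚ (Bm m)) + PowerSeries.X * (PowerSeries.C (m+1 : ℚ) * Bm m) := by
  unfold Bm
  rw [ps_dmul, ps_dpow, ps_dX, Rm_succ]
  have : (PowerSeries.C (m+1:ℚ) : RR) = ((m+1:ℕ):RR) := by simp
  rw [this]
  ring

lemma Bm_zero : Bm 0 = 1 := by
  have := PowerSeries.mk_one_mul_one_sub_eq_one ℚ
  unfold Bm Rm
  simp only [pow_zero]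
  rw [zero_add, pow_one, mul_comm]
  exact this

lemma Bm_coeff_zero (m : ℕ) : PowerSeries.coeff 0 (Bm (m+1)) = 0 := by
  rw [Bm_succ]; simp

lemma Bm_coeff_succ (m j : ℕ) : PowerSeries.coeff (j+1) (Bm (m+1)) =
    (j+1) * PowerSeries.coeff (j+1) (Bm m) + (m+1-j) * PowerSeries.coeff j (Bm m) := by
  rw [Bm_succ, map_add, PowerSeries.coeff_succ_X_mul, PowerSeries.coeff_succ_X_mul,
    PowerSeries.coeff_C_mul, sub_mul, one_mul, map_sub, PowerSeries.coeff_derivative]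
  cases j with
  | zero => simp
  | succ j =>
    rw [PowerSeries.coeff_succ_X_mul, PowerSeries.coeff_derivative]
    push_cast; ring

lemma Bm_nn (m : ℕ) : (∀ j, 0 ≤ PowerSeries.coeff j (Bm m)) ∧
    (∀ j, m < j → PowerSeries.coeff j (Bm m) = 0) := by
  induction m with
  | zero =>
    rw [Bm_zero]
    refine ⟨fun j => ?_, fun j hj => ?_⟩
    · rw [PowerSeries.coeff_one]; split_ifs <;> simp
    · rw [PowerSeries.coeff_one, if_neg (by omega)]
  | succ m ih =>
    obtain ⟨h1, h2⟩ := ih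
    refine ⟨fun j => ?_, fun j hj => ?_⟩
    · cases j with
      | zero => rw [Bm_coeff_zero]
      | succ j =>
        rw [Bm_coeff_succ]
        refine add_nonneg (mul_nonneg (by positivity) (h1 _)) ?_
        by_cases hj : m < j
        · rw [h2 j hj, mul_zero]
        · refine mul_nonneg ?_ (h1 _)
          have : (j:ℚ) ≤ m := by exact_mod_cast not_lt.mp hj
          linarith
    · cases j with
      | zero => omega
      | succ j => rw [Bm_coeff_succ, h2 _ (by omega), h2 _ (by omega)]; simp

lemma Bm_one (m : ℕ) : 0 < PowerSeries.coeff 1 (Bm (m+1)) := by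
  induction m with
  | zero =>
    have := Bm_coeff_succ 0 0
    rw [Bm_zero] at this
    simp only [zero_add] at this ⊢
    rw [this]; simp [PowerSeries.coeff_one]
  | succ m ih =>
    have := Bm_coeff_succ (m+1) 0
    simp only [zero_add, Bm_coeff_zero] at this
    rw [this]; simpa using ih

lemma Em_coeff (m k : ℕ) : PowerSeries.coeff k (Em m) =
    ∑ j ∈ range (k+1), PowerSeries.coeff j (Bm m) := by
  have h : Em m = Bm m * PowerSeries.mk 1 := by
    have := PowerSeries.mk_one_mul_one_sub_eq_one ℚ
    unfold Em Bm
    linear_combination - (1 - PowerSeries.X) ^ m * Rm m * this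
  rw [h, PowerSeries.coeff_mul,
    Finset.Nat.sum_antidiagonal_eq_sum_range_succ_mk]
  simp

lemma Em_nn (m k : ℕ) : 0 ≤ PowerSeries.coeff k (Em m) := by
  rw [Em_coeff]
  exact sum_nonneg fun j _ => (Bm_nn m).1 j

lemma Em_pos (m k : ℕ) (hk : 1 ≤ k) (hm : 1 ≤ m) : 0 < PowerSeries.coeff k (Em m) := by
  rw [Em_coeff]
  obtain ⟨m, rfl⟩ : ∃ m', m = m' + 1 := ⟨m - 1, by omega⟩
  exact sum_pos' (fun j _ => (Bm_nn _).1 j) ⟨1, by simp; omega, Bm_one m⟩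

/-- the Ehrhart polynomial -/
def ehrP (k n : ℕ) : Polynomial ℚ :=
  ∑ m ∈ range (n+1), Polynomial.monomial m (PowerSeries.coeff k ((gg n).coeff m * Em m))

lemma ehrP_coeff (k n m : ℕ) (hm : m ≤ n) : (ehrP k n).coeff m =
    PowerSeries.coeff k ((gg n).coeff m * Em m) := by
  unfold ehrP
  rw [Polynomial.finsetSum_coeff]
  simp only [Polynomial.coeff_monomial]
  rw [Finset.sum_ite_eq']
  simp; omega

lemma ehrP_natDegree (k n : ℕ) : (ehrP k n).natDegree ≤ n := by
  unfold ehrP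
  refine Polynomial.natDegree_sum_le_of_forall_le _ _ fun m hm => ?_
  exact (Polynomial.natDegree_monomial_le _).trans (by simpa [Nat.lt_succ_iff] using hm)

lemma ehrP_pos (k n m : ℕ) (hk : 1 ≤ k) (hm1 : 1 ≤ m) (hm : m ≤ n) : 0 < (ehrP k n).coeff m := by
  rw [ehrP_coeff k n m hm, PowerSeries.coeff_mul]
  refine sum_pos' (fun p _ => mul_nonneg ((g_nn n).1 _ _) (Em_nn _ _)) ⟨(0, k), by simp, ?_⟩
  exact mul_pos ((g_pos n).1 m hm) (Em_pos m k hk hm1)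

lemma ehrP_eval (k n t : ℕ) : (ehrP k n).eval (t:ℚ) =
    ∑ j ∈ range (k+1), PowerSeries.coeff j (PowerSeries.coeff n (FF ((k - j) * t))) := by
  unfold ehrP
  rw [Polynomial.eval_finsetSum]
  have : ∀ m, Polynomial.eval (t:ℚ) (Polynomial.monomial m (PowerSeries.coeff k ((gg n).coeff m * Em m)))
      = ∑ j ∈ range (k+1), PowerSeries.coeff j ((gg n).coeff m *
        ((((k - j) * t : ℕ) : RR) * (1 - PowerSeries.X)) ^ m) := by
    intro m
    rw [Polynomial.eval_monomial]
    unfold Em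
    rw [← mul_assoc, PowerSeries.coeff_mul, Finset.Nat.sum_antidiagonal_eq_sum_range_succ_mk, sum_mul]
    refine sum_congr rfl fun j hj => ?_
    have : (gg n).coeff m * ((((k - j) * t : ℕ) : RR) * (1 - PowerSeries.X)) ^ m =
      PowerSeries.C ((((k - j) * t : ℕ) : ℚ) ^ m) * ((gg n).coeff m * (1 - PowerSeries.X) ^ m) := by
      rw [map_pow, map_natCast, mul_pow]; ring
    rw [this, PowerSeries.coeff_C_mul]
    simp only [Rm, PowerSeries.coeff_mk]
    push_cast; ring
  simp only [this]
  rw [sum_comm]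
  refine sum_congr rfl fun j hj => ?_
  rw [← map_sum, ← (g_eval _ n).1, Polynomial.eval_eq_sum_range' (n := n+1)]
  have := (g_deg n).1
  omega

lemma FF_coeff (s n j : ℕ) : PowerSeries.coeff j (PowerSeries.coeff n (FF s)) =
    if j ≤ n then (-1:ℚ)^j * (s.choose j) * ((s + (n - j)).choose s) else 0 := by
  have hz : zw ^ s = ∑ i ∈ range (s+1), PowerSeries.C (PowerSeries.monomial i ((-1:ℚ)^i * (s.choose i))) * PowerSeries.X ^ i := by
    unfold zw
    rw [sub_eq_neg_add, add_pow]
    refine sum_congr rfl fun i _ => ?_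
    have : (PowerSeries.monomial i ((-1:ℚ)^i * (s.choose i)) : RR) = (-1)^i * PowerSeries.X ^ i * (s.choose i : RR) := by
      have h : ((-1)^i * PowerSeries.X ^ i * (s.choose i : RR)) =
          PowerSeries.C ((-1:ℚ)^i * (s.choose i)) * PowerSeries.X ^ i := by
        simp only [map_mul, map_pow, map_neg, map_one, map_natCast]; ring
      rw [h]
      ext a
      rw [PowerSeries.coeff_monomial, PowerSeries.coeff_C_mul, PowerSeries.coeff_X_pow]
      split_ifs <;> simp
    rw [this]
    simp only [map_mul, map_pow, map_neg, map_one, map_natCast, one_pow]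
    rw [neg_pow, mul_pow]; ring
  have hu : uu ^ (s+1) = PowerSeries.mk fun n => ((s+n).choose s : RR) :=
    PowerSeries.mk_one_pow_eq_mk_choose_add RR s
  unfold FF
  rw [hz, hu, sum_mul, map_sum, map_sum]
  have : ∀ i ∈ range (s+1), PowerSeries.coeff j (PowerSeries.coeff n
      (PowerSeries.C (PowerSeries.monomial i ((-1:ℚ)^i * (s.choose i))) * PowerSeries.X ^ i *
        PowerSeries.mk fun n => ((s+n).choose s : RR))) =
      if i = j then (if j ≤ n then (-1:ℚ)^j * (s.choose j) * ((s + (n - j)).choose s) else 0) else 0 := by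
    intro i _
    rw [mul_assoc, PowerSeries.coeff_C_mul, PowerSeries.coeff_X_pow_mul']
    by_cases hin : i ≤ n
    · rw [if_pos hin, PowerSeries.coeff_mk]
      have : (((s + (n-i)).choose s : ℕ) : RR) = PowerSeries.C (((s + (n-i)).choose s : ℕ) : ℚ) := by simp
      rw [this, PowerSeries.coeff_mul_C, PowerSeries.coeff_monomial]
      by_cases hij : i = j
      · subst hij; simp [hin]
      · rw [if_neg (Ne.symm hij), if_neg hij, zero_mul]
    · rw [if_neg hin]
      by_cases hij : i = j
      · subst hij; simp [hin]
      · simp [hij]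
  rw [sum_congr rfl this, sum_ite_eq']
  by_cases hjs : j ≤ s
  · rw [if_pos (by simp; omega)]
  · rw [if_neg (by simp; omega), Nat.choose_eq_zero_of_lt (by omega)]; simp

lemma choose_swap (s n j : ℕ) (hjs : j ≤ s) (hjn : j ≤ n) :
    s.choose j * (s + (n - j)).choose s = n.choose j * (s - j + n).choose n := by
  obtain ⟨a, rfl⟩ := Nat.exists_eq_add_of_le hjs
  obtain ⟨b, rfl⟩ := Nat.exists_eq_add_of_le hjn
  simp only [Nat.add_sub_cancel_left]
  have h1 := Nat.add_choose_mul_factorial_mul_factorial j a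
  have h2 := Nat.add_choose_mul_factorial_mul_factorial (j+a) b
  have h3 := Nat.add_choose_mul_factorial_mul_factorial j b
  have h4 := Nat.add_choose_mul_factorial_mul_factorial (j+b) a
  rw [← Nat.choose_symm_add] at h1 h2 h3 h4
  have e : j + a + b = j + b + a := by ring
  have e2 : a + (j + b) = j + b + a := by ring
  rw [e2, e]
  rw [e] at h2
  have hp : 0 < j.factorial * a.factorial * b.factorial := by positivity
  refine Nat.eq_of_mul_eq_mul_right hp ?_
  calc _ = (j + b + a).choose (j+a) * ((j+a).choose j * j.factorial * a.factorial) * b.factorial := by ring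
    _ = (j+b+a).factorial := by rw [h1, h2]
    _ = (j + b + a).choose (j+b) * ((j+b).choose j * j.factorial * b.factorial) * a.factorial := by rw [h3, h4]
    _ = _ := by ring

lemma indepCount_eq (k n t : ℕ) : indepCount k n t =
    #{f ∈ Fintype.piFinset fun _ : Fin n => range (t+1) | ∑ i, f i ≤ k * t} := by
  unfold indepCount
  rw [← Nat.card_eq_finsetCard]
  symm
  refine Nat.card_congr (Equiv.ofBijective (fun f => ⟨fun i => (f.1 i : ℤ), ?_⟩) ⟨?_, ?_⟩)
  · obtain ⟨f, hf⟩ := f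
    simp only [mem_filter, Fintype.mem_piFinset, mem_range] at hf
    refine ⟨fun i => ?_, ?_⟩
    · have := hf.1 i
      simp only
      omega
    · simp only
      exact_mod_cast hf.2
  · rintro ⟨f, hf⟩ ⟨g, hg⟩ h
    simp only [Subtype.mk.injEq] at h ⊢
    funext i
    exact_mod_cast congrFun h i
  · rintro ⟨x, hx, hs⟩
    have hc : ∀ i, ((x i).toNat : ℤ) = x i := fun i => Int.toNat_of_nonneg (hx i).1
    refine ⟨⟨fun i => (x i).toNat, ?_⟩, ?_⟩
    · simp only [mem_filter, Fintype.mem_piFinset, mem_range]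
      refine ⟨fun i => ?_, ?_⟩
      · have := hx i
        omega
      · zify
        simpa only [hc] using hs
    · simp only [Subtype.mk.injEq]
      funext i
      exact hc i

lemma count_gf (k n t : ℕ) : (indepCount k n t : ℚ) =
    PowerSeries.coeff (k*t) ((1 - (PowerSeries.X:RR)^(t+1))^n * (PowerSeries.mk 1)^(n+1)) := by
  have h0 := PowerSeries.mk_one_mul_one_sub_eq_one ℚ
  have h1 : (1 - (PowerSeries.X:RR)^(t+1)) * PowerSeries.mk 1 = ∑ i ∈ range (t+1), PowerSeries.X ^ i := by
    have := geom_sum_mul_neg (PowerSeries.X:RR) (t+1)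
    linear_combination (∑ i ∈ range (t+1), (PowerSeries.X:RR) ^ i) * h0 - (PowerSeries.mk 1) * this
  have h2 : (1 - (PowerSeries.X:RR)^(t+1))^n * (PowerSeries.mk 1)^(n+1) =
      (∏ _i : Fin n, ∑ i ∈ range (t+1), (PowerSeries.X:RR) ^ i) * PowerSeries.mk 1 := by
    rw [prod_const, ← h1, card_univ, Fintype.card_fin, mul_pow]; ring
  rw [h2, prod_univ_sum, sum_mul, map_sum, indepCount_eq, card_filter]
  push_cast
  refine sum_congr rfl fun f _ => ?_
  rw [prod_pow_eq_pow_sum, PowerSeries.coeff_X_pow_mul']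
  simp

lemma count_formula (k n t : ℕ) : (indepCount k n t : ℚ) = (ehrP k n).eval (t:ℚ) := by
  rw [count_gf, ehrP_eval]
  have hu : (PowerSeries.mk 1 : RR) ^ (n+1) = PowerSeries.mk fun i => ((n+i).choose n : ℚ) :=
    PowerSeries.mk_one_pow_eq_mk_choose_add ℚ n
  have hz : (1 - (PowerSeries.X:RR)^(t+1))^n = ∑ j ∈ range (n+1),
      PowerSeries.C ((-1:ℚ)^j * n.choose j) * PowerSeries.X ^ (j * (t+1)) := by
    rw [sub_eq_neg_add, add_pow]
    refine sum_congr rfl fun i _ => ?_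
    simp only [map_mul, map_pow, map_neg, map_one, map_natCast, one_pow]
    rw [neg_pow, ← pow_mul, mul_comm (t+1) i]; ring
  rw [hu, hz, sum_mul, map_sum]
  set T : ℕ → ℚ := fun j => if j ≤ n ∧ j ≤ k ∧ j ≤ (k-j)*t then
    (-1:ℚ)^j * n.choose j * ((k-j)*t - j + n).choose n else 0 with hT
  have e1 : ∀ j ∈ range (n+1), PowerSeries.coeff (k*t) (PowerSeries.C ((-1:ℚ)^j * n.choose j) *
      PowerSeries.X ^ (j * (t+1)) * PowerSeries.mk fun i => ((n+i).choose n : ℚ)) = T j := by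
    intro j hj
    have hj : j ≤ n := by simpa [Nat.lt_succ_iff] using hj
    rw [mul_assoc, PowerSeries.coeff_C_mul, PowerSeries.coeff_X_pow_mul', PowerSeries.coeff_mk, hT]
    have hiff : j * (t+1) ≤ k * t ↔ (j ≤ n ∧ j ≤ k ∧ j ≤ (k-j)*t) := by
      rw [Nat.sub_mul]
      constructor
      · intro h
        have : j ≤ k := by
          by_contra hc
          have := Nat.mul_le_mul_right t (not_le.mp hc)
          nlinarith
        have : j * t ≤ k * t := Nat.mul_le_mul_right t this
        rw [mul_add] at h
        refine ⟨hj, by assumption, by omega⟩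
      · rintro ⟨-, h1, h2⟩
        have : j * t ≤ k * t := Nat.mul_le_mul_right t h1
        rw [mul_add]; omega
    simp only [hiff]
    split_ifs with h
    · have : n + (k * t - j * (t+1)) = (k-j)*t - j + n := by
        rw [Nat.sub_mul, mul_add]; omega
      rw [this]
    · simp
  have e2 : ∀ j ∈ range (k+1), PowerSeries.coeff j (PowerSeries.coeff n (FF ((k - j) * t))) = T j := by
    intro j hj
    have hj : j ≤ k := by simpa [Nat.lt_succ_iff] using hj
    rw [FF_coeff, hT]
    by_cases hjn : j ≤ n
    · by_cases hjs : j ≤ (k-j)*t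
      · simp only [hj, hjn, hjs, and_self, if_true]
        have := choose_swap _ _ _ hjs hjn
        rw [mul_assoc, mul_assoc]
        congr 1
        exact_mod_cast this
      · simp only [hjs, and_false, if_false]
        rw [Nat.choose_eq_zero_of_lt (not_le.mp hjs)]; simp
    · simp [hjn]
  rw [sum_congr rfl e1, sum_congr rfl e2]
  have z1 : ∀ N, n ≤ N → ∑ j ∈ range (n+1), T j = ∑ j ∈ range (N+1), T j := fun N hN =>
    sum_subset (range_mono (by omega)) fun j _ hj => by
      rw [hT]; exact if_neg (by simp at hj; omega)
  have z2 : ∀ N, k ≤ N → ∑ j ∈ range (k+1), T j = ∑ j ∈ range (N+1), T j := fun N hN =>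
    sum_subset (range_mono (by omega)) fun j _ hj => by
      rw [hT]; exact if_neg (by simp at hj; omega)
  rw [z1 (n+k) (by omega), z2 (n+k) (by omega)]

lemma indepCount_zero (k n : ℕ) : indepCount k n 0 = 1 := by
  rw [indepCount_eq, card_eq_one]
  refine ⟨0, ?_⟩
  ext f
  simp only [mem_filter, Fintype.mem_piFinset, mem_singleton, mem_range]
  constructor
  · rintro ⟨h, -⟩; ext i; have := h i; simp; omega
  · rintro rfl; simp

theorem indep_uniform_ehrhart_positive (k n : ℕ) (hk : 1 ≤ k) (hkn : k ≤ n) :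
    ∃ p : Polynomial ℚ, p.natDegree = n ∧
      (∀ t : ℕ, (indepCount k n t : ℚ) = p.eval (t : ℚ)) ∧
      p.coeff 0 = 1 ∧ ∀ m, 1 ≤ m → m ≤ n → 0 < p.coeff m := by
  refine ⟨ehrP k n, ?_, count_formula k n, ?_, fun m h1 h2 => ehrP_pos k n m hk h1 h2⟩
  · refine le_antisymm (ehrP_natDegree k n) ?_
    exact Polynomial.le_natDegree_of_ne_zero (ehrP_pos k n n hk (by omega) le_rfl).ne'
  · have := count_formula k n 0
    rw [indepCount_zero] at this
    rw [Polynomial.coeff_zero_eq_eval_zero]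
    simpa using this.symm
end
end
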